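/- arXiv:0911.3627 — 3 statements merged into one kernel-verified Lean document; each statement's English description precedes it below -/
import Mathlib

section
/- Let f : ℕ → ℚ(q) be a q-holonomic sequence of rational functions such that f(n) ≠ 0 for every n. Then the degree of f(n) is, for all sufficiently large n, a quadratic quasi-polynomial: there exist N ∈ ℕ, a positive integer π, and functions c₂, c₁, c₀ : ℕ → ℚ, each periodic with period π, such that deg(f(n)) = c₂(n)·n² + c₁(n)·n + c₀(n) for all n ≥ N. -/
section Helpers
open Polynomial Filter


/-- shift operator on sequences -/
noncomputable def Sh (R : Type) [CommRing R] : Module.End R (ℕ → R) where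
  toFun u := fun n => u (n + 1)
  map_add' := fun _ _ => rfl
  map_smul' := fun _ _ => rfl

lemma Sh_pow (R : Type) [CommRing R] (k : ℕ) (u : ℕ → R) (n : ℕ) :
    ((Sh R) ^ k) u n = u (n + k) := by
  induction k generalizing n with
  | zero => rfl
  | succ k ih =>
    rw [pow_succ', Module.End.mul_apply]
    show ((Sh R) ^ k) u (n + 1) = _
    rw [ih]; congr 1; ring

lemma aeval_Sh {R : Type} [CommRing R] (P : R[X]) (u : ℕ → R) (n m : ℕ) (hm : P.natDegree < m) :
    (aeval (Sh R) P) u n = ∑ k ∈ Finset.range m, P.coeff k * u (n + k) := by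
  rw [aeval_eq_sum_range' hm]
  simp [LinearMap.sum_apply, Finset.sum_apply, Sh_pow]

lemma aeval_Sh_monomial {R : Type} [CommRing R] (k : ℕ) (a : R) (u : ℕ → R) (n : ℕ) :
    (aeval (Sh R) (C a * X ^ k)) u n = a * u (n + k) := by
  simp [Sh_pow]

lemma aeval_Sh_congr {R : Type} [CommRing R] (P : R[X]) (u v : ℕ → R) (n : ℕ)
    (h : ∀ m ≥ n, u m = v m) :
    (aeval (Sh R) P) u n = (aeval (Sh R) P) v n := by
  rw [aeval_Sh P u n _ (Nat.lt_succ_self _), aeval_Sh P v n _ (Nat.lt_succ_self _)]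
  exact Finset.sum_congr rfl fun k _ => by rw [h _ (by omega)]

section hansel
variable (p : ℕ) [hp : Fact p.Prime]

lemma hansel_root (P Q : ℚ_[p][X]) (c : ℚ_[p]) (hc : ‖c‖ ≤ 1) (ε : ℝ) (he : 0 ≤ ε) (k : ℕ)
    (h : P = (X - C c) * Q) (hP : ∀ j ≥ k + 1, ‖P.coeff j‖ ≤ ε) : ∀ j ≥ k, ‖Q.coeff j‖ ≤ ε := by
  have key : ∀ d j, j ≥ k → Q.natDegree < j + d → ‖Q.coeff j‖ ≤ ε := by
    intro d
    induction d with
    | zero =>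
      intro j _ hd
      rw [coeff_eq_zero_of_natDegree_lt (by omega)]; simpa using he
    | succ d ih =>
      intro j hj hd
      have h1 : Q.coeff j = P.coeff (j + 1) + c * Q.coeff (j + 1) := by
        rw [h, sub_mul, coeff_sub, coeff_X_mul, coeff_C_mul]; ring
      rw [h1]
      refine (IsUltrametricDist.norm_add_le_max _ _).trans (max_le (hP _ (by omega)) ?_)
      rw [norm_mul]
      have := ih (j + 1) (by omega) (by omega)
      calc ‖c‖ * ‖Q.coeff (j + 1)‖ ≤ 1 * ε := by gcongr
        _ = ε := one_mul _
  intro j hj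
  exact key (Q.natDegree + 1) j hj (by omega)

lemma hansel_eval (ε : ℝ) (he : 0 ≤ ε) (S : Finset ℕ) : ∀ (P : ℚ_[p][X]),
    (∀ n ∈ S, P.eval (n : ℚ_[p]) = 0) → (∀ j ≥ S.card, ‖P.coeff j‖ ≤ ε) →
    ∀ x : ℕ, ‖P.eval (x : ℚ_[p])‖ ≤ ε := by
  have hn1 : ∀ n : ℕ, ‖(n : ℚ_[p])‖ ≤ 1 := fun n => by
    simpa using Padic.norm_int_le_one (p := p) (n : ℤ)
  induction S using Finset.induction_on with
  | empty =>
    intro P _ hP x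
    rw [eval_eq_sum_range]
    refine IsUltrametricDist.norm_sum_le_of_forall_le_of_nonneg he fun i _ => ?_
    rw [norm_mul, norm_pow]
    have := hP i (by simp)
    calc _ ≤ ε * 1 := by gcongr; exact pow_le_one₀ (norm_nonneg _) (hn1 x)
      _ = ε := mul_one _
  | insert a S ha ih =>
    intro P hS hP x
    obtain ⟨Q, hQ⟩ := dvd_iff_isRoot.2 (hS a (by simp))
    rw [Finset.card_insert_of_notMem ha] at hP
    have hQc := hansel_root p P Q a (hn1 a) ε he S.card hQ hP
    have h1 := ih Q (by
      intro n hn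
      have h2 := hS n (by simp [hn])
      rw [hQ, eval_mul] at h2
      rcases mul_eq_zero.1 h2 with h3 | h3
      · exfalso
        simp only [eval_sub, eval_X, eval_C, sub_eq_zero, Nat.cast_inj] at h3
        exact ha (h3 ▸ hn)
      · exact h3) hQc x
    rw [hQ, eval_mul, norm_mul]
    have h4 : ‖eval (x : ℚ_[p]) (X - C (a : ℚ_[p]))‖ ≤ 1 := by
      have := Padic.norm_int_le_one (p := p) ((x : ℤ) - a)
      simpa using this
    calc _ ≤ 1 * ε := by gcongr
      _ = ε := one_mul _

lemma hansel_norm (hp2 : 2 < p) (N k : ℕ) (d : ℤ) (hd : (p : ℤ) ^ k ∣ p ^ N * d) :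
    ‖((d : ℚ_[p]) / (k.factorial : ℚ_[p]))‖ ≤ (p : ℝ) ^ N * ((p : ℝ)⁻¹) ^ (k / 2) := by
  have hp0 : (0 : ℝ) < p := by exact_mod_cast hp.1.pos
  obtain ⟨c, hc⟩ := hd
  have h1 : ‖(d : ℚ_[p])‖ ≤ (p : ℝ) ^ N * ((p : ℝ)⁻¹) ^ k := by
    have h2 : ((p : ℚ_[p]) ^ N * d) = p ^ k * c := by exact_mod_cast congrArg (Int.cast : ℤ → ℚ_[p]) hc
    have h3 := congrArg norm h2
    rw [norm_mul, norm_mul, norm_pow, norm_pow, Padic.norm_p] at h3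
    have h4 := Padic.norm_int_le_one (p := p) c
    have h5 : ((p : ℝ)⁻¹) ^ N * ‖(d : ℚ_[p])‖ ≤ ((p : ℝ)⁻¹) ^ k := by
      rw [h3]; exact mul_le_of_le_one_right (by positivity) h4
    calc ‖(d : ℚ_[p])‖ = (p : ℝ) ^ N * (((p : ℝ)⁻¹) ^ N * ‖(d : ℚ_[p])‖) := by
          rw [← mul_assoc, ← mul_pow, mul_inv_cancel₀ hp0.ne', one_pow, one_mul]
      _ ≤ _ := by gcongr
  have h6 : ((p : ℝ)⁻¹) ^ (k / 2) ≤ ‖(k.factorial : ℚ_[p])‖ := by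
    have h7 := sub_one_mul_padicValNat_factorial (p := p) k
    have h8 : padicValNat p k.factorial ≤ k / 2 := by
      have : 2 * padicValNat p k.factorial ≤ k := by
        calc 2 * padicValNat p k.factorial ≤ (p - 1) * padicValNat p k.factorial :=
              Nat.mul_le_mul_right _ (by omega)
          _ ≤ k := by rw [h7]; omega
      omega
    have h9 : ‖(k.factorial : ℚ_[p])‖ = ((p : ℝ)⁻¹) ^ (padicValNat p k.factorial) := by
      rw [Padic.norm_eq_zpow_neg_valuation (by exact_mod_cast k.factorial_ne_zero)]
      rw [Padic.valuation_natCast, zpow_neg, zpow_natCast, inv_pow]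
    rw [h9]
    exact pow_le_pow_of_le_one (by positivity) (inv_le_one_of_one_le₀ (by exact_mod_cast hp.1.one_le)) h8
  rw [norm_div, div_le_iff₀ (by simpa using k.factorial_ne_zero)]
  refine h1.trans ?_
  rw [mul_assoc]
  gcongr
  calc ((p : ℝ)⁻¹) ^ k ≤ ((p : ℝ)⁻¹) ^ (k / 2 + k / 2) :=
        pow_le_pow_of_le_one (by positivity) (inv_le_one_of_one_le₀ (by exact_mod_cast hp.1.one_le)) (by omega)
    _ = ((p : ℝ)⁻¹) ^ (k / 2) * ((p : ℝ)⁻¹) ^ (k / 2) := pow_add _ _ _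
    _ ≤ _ := by gcongr

lemma hansel (hp2 : 2 < p) (w d : ℕ → ℤ) (N : ℕ) (hd : ∀ k, (p : ℤ) ^ k ∣ p ^ N * d k)
    (hw : ∀ n, w n = ∑ k ∈ Finset.range (n + 1), (n.choose k : ℤ) * d k)
    (hinf : ∀ n0, ∃ n ≥ n0, w n = 0) (x : ℕ) : w x = 0 := by
  have hp0 : (0 : ℝ) < p := by exact_mod_cast hp.1.pos
  have hinf' : {n | w n = 0}.Infinite := by
    rw [Set.infinite_iff_exists_gt]
    intro a
    obtain ⟨n, h1, h2⟩ := hinf (a + 1)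
    exact ⟨n, h2, by omega⟩
  let R : ℕ → ℚ_[p][X] := fun m => ∑ k ∈ Finset.range (m + 1),
    C ((d k : ℚ_[p]) / k.factorial) * descPochhammer ℚ_[p] k
  have hR : ∀ m n, n ≤ m → (R m).eval (n : ℚ_[p]) = w n := by
    intro m n hnm
    simp only [R, eval_finset_sum, eval_mul, eval_C, descPochhammer_eval_eq_descFactorial,
      Nat.descFactorial_eq_factorial_mul_choose]
    rw [hw n]
    push_cast
    rw [← Finset.sum_subset (Finset.range_subset_range.2 (by omega : n + 1 ≤ m + 1))]
    · refine Finset.sum_congr rfl fun k _ => ?_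
      have : (k.factorial : ℚ_[p]) ≠ 0 := by exact_mod_cast k.factorial_ne_zero
      field_simp
    · intro k _ hk
      rw [Nat.choose_eq_zero_of_lt (by simpa using hk)]; simp
  have hcoef : ∀ m j, ‖(R m).coeff j‖ ≤ (p : ℝ) ^ N * ((p : ℝ)⁻¹) ^ (j / 2) := by
    intro m j
    simp only [R, finset_sum_coeff, coeff_C_mul]
    refine IsUltrametricDist.norm_sum_le_of_forall_le_of_nonneg (by positivity) fun k _ => ?_
    rcases lt_or_ge k j with h | h
    · rw [coeff_eq_zero_of_natDegree_lt (by rw [descPochhammer_natDegree]; exact h)]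
      simp; positivity
    · rw [norm_mul]
      have h1 := hansel_norm p hp2 N k (d k) (hd k)
      have h2 : ‖(descPochhammer ℚ_[p] k).coeff j‖ ≤ 1 := by
        rw [← descPochhammer_map (Int.castRingHom ℚ_[p]) k, coeff_map]
        exact Padic.norm_int_le_one _
      calc _ ≤ ((p : ℝ) ^ N * ((p : ℝ)⁻¹) ^ (k / 2)) * 1 := by gcongr
        _ ≤ _ := by
          rw [mul_one]; gcongr ?_ * ?_
          exact pow_le_pow_of_le_one (by positivity)
            (inv_le_one_of_one_le₀ (by exact_mod_cast hp.1.one_le)) (by omega)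
  have hall : ∀ K : ℕ, ‖(w x : ℚ_[p])‖ ≤ (p : ℝ) ^ N * ((p : ℝ)⁻¹) ^ K := by
    intro K
    obtain ⟨S, hS, hcard⟩ := hinf'.exists_subset_card_eq (2 * K)
    let m := x + S.sup id
    have := hansel_eval p ((p : ℝ) ^ N * ((p : ℝ)⁻¹) ^ K) (by positivity) S (R m) (by
      intro n hn
      rw [hR m n (by have := Finset.le_sup (f := id) hn; simp at this; omega)]
      have := hS hn
      simp at this; simp [this]) (by
      intro j hj
      refine (hcoef m j).trans ?_
      gcongr ?_ * ?_
      exact pow_le_pow_of_le_one (by positivity)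
            (inv_le_one_of_one_le₀ (by exact_mod_cast hp.1.one_le)) (by omega)) x
    rwa [hR m x (by omega)] at this
  have hlim : Tendsto (fun K : ℕ => (p : ℝ) ^ N * ((p : ℝ)⁻¹) ^ K) atTop (nhds ((p : ℝ) ^ N * 0)) :=
    (tendsto_pow_atTop_nhds_zero_of_lt_one (by positivity)
      (inv_lt_one_of_one_lt₀ (by exact_mod_cast hp.1.one_lt))).const_mul _
  rw [mul_zero] at hlim
  have h0 : ‖(w x : ℚ_[p])‖ ≤ 0 := ge_of_tendsto' hlim hall
  have := norm_le_zero_iff.1 h0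
  exact_mod_cast this

end hansel


lemma sml_unit (Φ : ℤ[X]) (hΦ : Φ.Monic) (p : ℕ) [hp : Fact p.Prime] (h0 : ¬ (p : ℤ) ∣ Φ.coeff 0) :
    ∃ M : ℕ, 0 < M ∧ ∃ Z Y : ℤ[X], X ^ M - 1 = C (p : ℤ) * Z + Φ * Y := by
  set F : (ZMod p)[X] := Φ.map (Int.castRingHom (ZMod p)) with hF
  have hFm : F.Monic := hΦ.map _
  have hF0 : F.coeff 0 ≠ 0 := by
    rw [hF, coeff_map]
    intro h
    exact h0 ((ZMod.intCast_zmod_eq_zero_iff_dvd _ p).1 h)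
  have hfin : Module.Finite (ZMod p) (AdjoinRoot F) := hFm.finite_adjoinRoot
  have hfin2 : Finite (AdjoinRoot F) := Module.finite_of_finite (ZMod p)
  have hu : IsUnit (AdjoinRoot.root F) := by
    have h1 : AdjoinRoot.mk F (F.divX * X + C (F.coeff 0)) = 0 := by
      rw [divX_mul_X_add]; exact AdjoinRoot.mk_self
    rw [map_add, map_mul, AdjoinRoot.mk_X] at h1
    apply IsUnit.of_mul_eq_one (AdjoinRoot.mk F (-F.divX * C (F.coeff 0)⁻¹))
    have h2 : AdjoinRoot.mk F (C (F.coeff 0)) * AdjoinRoot.mk F (C (F.coeff 0)⁻¹) = 1 := by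
      rw [← map_mul, ← C_mul, mul_inv_cancel₀ hF0, C_1, map_one]
    rw [map_mul, map_neg, ← h2]
    linear_combination (- AdjoinRoot.mk F (C (F.coeff 0)⁻¹)) * h1
  obtain ⟨x, hx⟩ := hu
  have hfo := isOfFinOrder_of_finite x
  obtain ⟨M, hM, hxM⟩ := isOfFinOrder_iff_pow_eq_one.1 hfo
  refine ⟨M, hM, ?_⟩
  have h3 : AdjoinRoot.mk F (X ^ M - 1) = 0 := by
    rw [map_sub, map_pow, AdjoinRoot.mk_X, ← hx, ← Units.val_pow_eq_pow_val, hxM]; simp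
  obtain ⟨Y', hY'⟩ := AdjoinRoot.mk_eq_zero.1 h3
  obtain ⟨Y, rfl⟩ := Polynomial.map_surjective (Int.castRingHom (ZMod p)) ZMod.intCast_surjective Y'
  have h4 : (X ^ M - 1 - Φ * Y).map (Int.castRingHom (ZMod p)) = 0 := by
    simp [Polynomial.map_sub, hY', hF]
  have h5 : C (p : ℤ) ∣ X ^ M - 1 - Φ * Y := by
    rw [C_dvd_iff_dvd_coeff]
    intro i
    have := congrArg (fun q => q.coeff i) h4
    simp only [coeff_map, coeff_zero] at this
    exact (ZMod.intCast_zmod_eq_zero_iff_dvd _ p).1 this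
  obtain ⟨Z, hZ⟩ := h5
  exact ⟨Z, Y, by rw [← hZ]; ring⟩

lemma sml_binom {R : Type} [CommRing R] (p z f y : R) (N k : ℕ) :
    ∃ A B, p ^ N * (p * z + f * y) ^ k = p ^ k * A + f ^ N * B := by
  have : ∀ s : Finset ℕ, s ⊆ Finset.range (k + 1) → ∃ A B, p ^ N * ∑ m ∈ s, (p * z) ^ m * (f * y) ^ (k - m) * (k.choose m : R)
      = p ^ k * A + f ^ N * B := by
    intro s
    induction s using Finset.induction_on with
    | empty => intro _; exact ⟨0, 0, by simp⟩
    | insert a s ha ih =>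
      intro hs
      obtain ⟨A, B, h⟩ := ih ((Finset.subset_insert _ _).trans hs)
      have hak : a ≤ k := by
        have := hs (Finset.mem_insert_self a s)
        simpa [Nat.lt_succ_iff] using this
      rw [Finset.sum_insert ha, mul_add, h]
      by_cases hc : N ≤ k - a
      · refine ⟨A, B + p ^ N * (p * z) ^ a * (f ^ (k - a - N) * y ^ (k - a)) * (k.choose a : R), ?_⟩
        have : f ^ (k - a) = f ^ N * f ^ (k - a - N) := by rw [← pow_add]; congr 1; omega
        rw [mul_pow f y, this]; ring
      · refine ⟨A + p ^ (N + a - k) * z ^ a * (f * y) ^ (k - a) * (k.choose a : R), B, ?_⟩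
        have : p ^ N * p ^ a = p ^ k * p ^ (N + a - k) := by rw [← pow_add, ← pow_add]; congr 1; omega
        rw [mul_pow p z]
        linear_combination (z ^ a * (f * y) ^ (k - a) * (k.choose a : R)) * this
  obtain ⟨A, B, h⟩ := this _ subset_rfl
  exact ⟨A, B, by rw [add_pow, h]⟩

lemma sml_int (Φ : ℤ[X]) (hΦ : Φ.Monic) (h0 : Φ.coeff 0 ≠ 0) :
    ∃ M : ℕ, 0 < M ∧ ∀ (N : ℕ) (u : ℕ → ℤ), aeval (Sh ℤ) (Φ ^ N) u = 0 → ∀ r,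
      (∀ n0, ∃ n ≥ n0, u (M * n + r) = 0) → ∀ n, u (M * n + r) = 0 := by
  obtain ⟨p, hpge, hpp⟩ := Nat.exists_infinite_primes ((Φ.coeff 0).natAbs + 3)
  have : Fact p.Prime := ⟨hpp⟩
  have hnd : ¬ (p : ℤ) ∣ Φ.coeff 0 := by
    intro h
    have := Int.natAbs_dvd_natAbs.2 h
    have := Nat.le_of_dvd (by omega) this
    simp at this
    omega
  obtain ⟨M, hM, Z, Y, hZY⟩ := sml_unit Φ hΦ p hnd
  refine ⟨M, hM, fun N u hu r hinf n => ?_⟩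
  refine hansel p (by omega) (fun n => u (M * n + r)) (fun k => aeval (Sh ℤ) ((X ^ M - 1 : ℤ[X]) ^ k) u r) N ?_ ?_ hinf n
  · intro k
    obtain ⟨A, B, hAB⟩ := sml_binom (C (p : ℤ)) Z Φ Y N k
    rw [← hZY] at hAB
    have h1 := congrArg (fun P => aeval (Sh ℤ) P u r) hAB
    rw [mul_comm (Φ ^ N) B, map_add, map_mul _ B, ← C_pow, ← C_pow, LinearMap.add_apply, Module.End.mul_apply, hu,
      map_zero, ← smul_eq_C_mul, ← smul_eq_C_mul, map_smul, map_smul] at h1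
    simp only [LinearMap.add_apply, add_zero, LinearMap.smul_apply, Pi.smul_apply, Pi.add_apply, Pi.zero_apply, smul_eq_mul] at h1
    exact ⟨_, h1⟩
  · intro n
    have h1 : (X ^ (M * n) : ℤ[X]) = ∑ k ∈ Finset.range (n + 1), C (n.choose k : ℤ) * (X ^ M - 1) ^ k := by
      rw [pow_mul]
      conv_lhs => rw [← sub_add_cancel (X ^ M : ℤ[X]) 1]
      rw [add_pow]
      refine Finset.sum_congr rfl fun k _ => ?_
      simp [mul_comm]
    have h2 := congrArg (fun P => aeval (Sh ℤ) P u r) h1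
    simp only [map_pow, aeval_X, Sh_pow] at h2
    rw [show M * n + r = r + M * n by ring, h2, map_sum, LinearMap.sum_apply, Finset.sum_apply]
    refine Finset.sum_congr rfl fun k _ => ?_
    rw [← smul_eq_C_mul, map_smul]; simp

lemma cast_aeval_Sh (P : ℤ[X]) (w : ℕ → ℤ) (n : ℕ) :
    ((aeval (Sh ℤ) P w n : ℤ) : ℚ) =
      aeval (Sh ℚ) (P.map (Int.castRingHom ℚ)) (fun n => (w n : ℚ)) n := by
  rw [aeval_Sh P w n _ (Nat.lt_succ_self _),
    aeval_Sh _ _ n (P.natDegree + 1) (Nat.lt_succ_of_le natDegree_map_le)]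
  push_cast
  simp

lemma scale_aeval_Sh (P : ℚ[X]) (a : ℚ) (u : ℕ → ℚ) :
    aeval (Sh ℚ) (scaleRoots P a) (fun n => a ^ n * u n) =
      a ^ P.natDegree • (fun n => a ^ n * aeval (Sh ℚ) P u n) := by
  funext n
  rw [aeval_Sh _ _ n (P.natDegree + 1) (by simp), Pi.smul_apply,
    aeval_Sh P u n _ (Nat.lt_succ_self _), smul_eq_mul, Finset.mul_sum, Finset.mul_sum]
  refine Finset.sum_congr rfl fun k hk => ?_
  have hk' : k ≤ P.natDegree := by simpa [Nat.lt_succ_iff] using hk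
  rw [coeff_scaleRoots]
  have : a ^ (P.natDegree - k) * a ^ k = a ^ P.natDegree := by rw [← pow_add]; congr 1; omega
  rw [pow_add, ← this]; ring

lemma scale_pow_aeval_Sh (P : ℚ[X]) (a : ℚ) (N : ℕ) (u : ℕ → ℚ) :
    aeval (Sh ℚ) ((scaleRoots P a) ^ N) (fun n => a ^ n * u n) =
      (a ^ P.natDegree) ^ N • (fun n => a ^ n * aeval (Sh ℚ) (P ^ N) u n) := by
  induction N generalizing u with
  | zero => simp
  | succ N ih =>
    rw [pow_succ, map_mul, Module.End.mul_apply, scale_aeval_Sh, map_smul, ih, smul_smul]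
    rw [pow_succ P, map_mul, Module.End.mul_apply]
    congr 1
    ring

lemma monic_integral (Q : ℤ[X]) (hQ : Q.Monic) (v : ℕ → ℚ)
    (hv : aeval (Sh ℚ) (Q.map (Int.castRingHom ℚ)) v = 0) :
    ∃ b : ℚ, b ≠ 0 ∧ ∀ n, ∃ z : ℤ, b * v n = z := by
  have hL : ∀ L : ℕ, ∃ b : ℤ, b ≠ 0 ∧ ∀ n < L, ∃ z : ℤ, (b : ℚ) * v n = z := by
    intro L
    induction L with
    | zero => exact ⟨1, one_ne_zero, by simp⟩
    | succ L ih =>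
      obtain ⟨b, hb, h⟩ := ih
      refine ⟨b * (v L).den, mul_ne_zero hb (by exact_mod_cast (v L).den_ne_zero), fun n hn => ?_⟩
      rcases Nat.lt_succ_iff_lt_or_eq.1 hn with h1 | rfl
      · obtain ⟨z, hz⟩ := h n h1
        exact ⟨z * (v L).den, by push_cast; rw [← hz]; ring⟩
      · refine ⟨b * (v n).num, ?_⟩
        push_cast
        rw [mul_assoc, mul_comm ((v n).den : ℚ), Rat.mul_den_eq_num]
  obtain ⟨b, hb, h⟩ := hL Q.natDegree
  refine ⟨b, by exact_mod_cast hb, fun n => ?_⟩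
  induction n using Nat.strong_induction_on with
  | _ n ih =>
    rcases lt_or_ge n Q.natDegree with h1 | h1
    · exact h n h1
    have h2 := congrFun hv (n - Q.natDegree)
    rw [aeval_Sh _ _ _ (Q.natDegree + 1) (Nat.lt_succ_of_le natDegree_map_le), Finset.sum_range_succ] at h2
    have h3 : (Q.map (Int.castRingHom ℚ)).coeff Q.natDegree = 1 := by
      rw [coeff_map, coeff_natDegree, hQ.leadingCoeff]; simp
    rw [h3, one_mul, Nat.sub_add_cancel h1, Pi.zero_apply] at h2
    choose z hz using ih
    have h4 : ∀ k : Fin Q.natDegree, n - Q.natDegree + k < n := fun k => by omega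
    refine ⟨- ∑ k : Fin Q.natDegree, Q.coeff k * z _ (h4 k), ?_⟩
    rw [eq_neg_of_add_eq_zero_right h2, ← Fin.sum_univ_eq_sum_range
      (fun k => (Q.map (Int.castRingHom ℚ)).coeff k * v (n - Q.natDegree + k))]
    push_cast
    rw [mul_neg, Finset.mul_sum]
    congr 1
    refine Finset.sum_congr rfl fun k _ => ?_
    rw [← hz, coeff_map]; simp; ring

lemma sml (P : ℚ[X]) (h0 : P.coeff 0 ≠ 0) :
    ∃ M : ℕ, 0 < M ∧ ∀ (N : ℕ) (u : ℕ → ℚ), aeval (Sh ℚ) (P ^ N) u = 0 → ∀ r,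
      (∀ n, u (M * n + r) = 0) ∨ ∃ n0, ∀ n ≥ n0, u (M * n + r) ≠ 0 := by
  have hP : P ≠ 0 := by rintro rfl; simp at h0
  set c := P.leadingCoeff with hc
  have hc0 : c ≠ 0 := leadingCoeff_ne_zero.2 hP
  set P' : ℚ[X] := P * C c⁻¹ with hP'
  have hm : P'.Monic := monic_mul_leadingCoeff_inv hP
  set a : ℤ := (IsLocalization.commonDenom (nonZeroDivisors ℤ) P'.support P'.coeff : ℤ) with ha
  have ha0 : a ≠ 0 := nonZeroDivisors.coe_ne_zero _
  have hl : P'.scaleRoots (algebraMap ℤ ℚ a) ∈ lifts (algebraMap ℤ ℚ) :=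
    IsLocalization.scaleRoots_commonDenom_mem_lifts (nonZeroDivisors ℤ) P'
      (by rw [hm.leadingCoeff]; exact ⟨1, by simp⟩)
  obtain ⟨Φ, hΦ, -, hΦm⟩ := lifts_and_natDegree_eq_and_monic hl ((monic_scaleRoots_iff _).2 hm)
  have hΦ' : Φ.map (Int.castRingHom ℚ) = P'.scaleRoots (a : ℚ) := hΦ
  have haq : (a : ℚ) ≠ 0 := by exact_mod_cast ha0
  have hΦ0 : Φ.coeff 0 ≠ 0 := by
    intro h
    have h1 : (Φ.map (Int.castRingHom ℚ)).coeff 0 = 0 := by rw [coeff_map, h]; simp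
    rw [hΦ', coeff_scaleRoots, hP', coeff_mul_C] at h1
    simp [h0, hc0, haq] at h1
  obtain ⟨M, hM, hS⟩ := sml_int Φ hΦm hΦ0
  refine ⟨M, hM, fun N u hu r => ?_⟩
  have h1 : aeval (Sh ℚ) (P' ^ N) u = 0 := by
    rw [hP', mul_pow, mul_comm, map_mul, Module.End.mul_apply, hu, map_zero]
  have h2 := scale_pow_aeval_Sh P' a N u
  rw [h1] at h2
  have h3 : aeval (Sh ℚ) ((Φ ^ N).map (Int.castRingHom ℚ)) (fun n => (a : ℚ) ^ n * u n) = 0 := by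
    rw [Polynomial.map_pow, hΦ', h2]; funext n; simp
  obtain ⟨b, hb, hz⟩ := monic_integral (Φ ^ N) (hΦm.pow N) _ h3
  choose z hz using hz
  have hz' : (fun n => (z n : ℚ)) = b • (fun n => (a : ℚ) ^ n * u n) := by
    funext n; rw [← hz]; rfl
  have h4 : aeval (Sh ℤ) (Φ ^ N) z = 0 := by
    funext n
    have := cast_aeval_Sh (Φ ^ N) z n
    rw [hz', map_smul, h3] at this
    simpa using this
  have hzu : ∀ n, z n = 0 ↔ u n = 0 := by
    intro n
    have : (z n : ℚ) = 0 ↔ u n = 0 := by rw [← hz]; simp [hb, haq]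
    exact_mod_cast this
  have h5 := hS N z h4 r
  simp only [hzu] at h5
  by_cases hi : ∀ n0, ∃ n ≥ n0, u (M * n + r) = 0
  · exact Or.inl (h5 hi)
  · right
    push Not at hi
    exact hi


lemma aeval_Sh_ev (P : ℚ[X]) (u v : ℕ → ℚ) (h : ∀ᶠ n in atTop, u n = v n) :
    ∀ᶠ n in atTop, aeval (Sh ℚ) P u n = aeval (Sh ℚ) P v n := by
  obtain ⟨N, hN⟩ := eventually_atTop.1 h
  exact eventually_atTop.2 ⟨N, fun n hn => aeval_Sh_congr P u v n fun m hm => hN m (hn.trans hm)⟩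

/-- sequences annihilated by a power of `P(E)` -/
noncomputable def US (P : ℚ[X]) : Submodule ℚ (ℕ → ℚ) where
  carrier := {u | ∃ N, aeval (Sh ℚ) (P ^ N) u = 0}
  zero_mem' := ⟨0, by simp⟩
  add_mem' := by
    rintro a b ⟨N, hN⟩ ⟨M, hM⟩
    refine ⟨N + M, ?_⟩
    rw [map_add]
    nth_rewrite 1 [add_comm N M]
    rw [pow_add, pow_add, map_mul, map_mul, Module.End.mul_apply, Module.End.mul_apply, hN, hM]
    simp
  smul_mem' := by
    rintro c a ⟨N, hN⟩
    exact ⟨N, by rw [map_smul, hN, smul_zero]⟩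

lemma US_aeval {P : ℚ[X]} (Q : ℚ[X]) {u : ℕ → ℚ} (hu : u ∈ US P) : aeval (Sh ℚ) Q u ∈ US P := by
  obtain ⟨N, hN⟩ := hu
  exact ⟨N, by rw [← Module.End.mul_apply, ← map_mul, mul_comm, map_mul, Module.End.mul_apply, hN,
    map_zero]⟩

lemma US_shift {P : ℚ[X]} (k : ℕ) {u : ℕ → ℚ} (hu : u ∈ US P) : (fun n => u (n + k)) ∈ US P := by
  have := US_aeval (X ^ k) hu
  convert this using 1
  funext n
  rw [map_pow, aeval_X, Sh_pow]

lemma Back (P : ℚ[X]) (hP : P ≠ 0) (u : ℕ → ℚ) (n0 : ℕ) (h : ∀ n ≥ n0, aeval (Sh ℚ) P u n = 0)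
    (hu : ∀ᶠ n in atTop, u n = 0) : ∀ n ≥ n0 + P.natTrailingDegree, u n = 0 := by
  obtain ⟨B, hB⟩ := eventually_atTop.1 hu
  have key : ∀ j, ∀ m ≥ n0 + P.natTrailingDegree, B ≤ m + j → u m = 0 := by
    intro j
    induction j with
    | zero => intro m _ h; exact hB m h
    | succ j ih =>
      intro m hm hj
      have h1 := h (m - P.natTrailingDegree) (by omega)
      rw [aeval_Sh P u _ _ (Nat.lt_succ_self _), Finset.sum_eq_single P.natTrailingDegree] at h1
      · rw [Nat.sub_add_cancel (by omega)] at h1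
        have h2 : P.coeff P.natTrailingDegree ≠ 0 := by
          rw [← trailingCoeff]; exact trailingCoeff_nonzero_iff_nonzero.2 hP
        simpa [h2] using h1
      · intro k _ hk
        rcases lt_or_gt_of_ne hk with h2 | h2
        · rw [coeff_eq_zero_of_lt_natTrailingDegree h2, zero_mul]
        · rw [ih _ (by omega) (by omega), mul_zero]
      · intro h2
        exact absurd (Finset.mem_range.2 (Nat.lt_succ_of_le (natTrailingDegree_le_natDegree P))) h2
  intro n hn
  exact key B n hn (by omega)

lemma US_eq_zero {P : ℚ[X]} (hP : P.coeff 0 ≠ 0) {u : ℕ → ℚ} (hu : u ∈ US P)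
    (h : ∀ᶠ n in atTop, u n = 0) : u = 0 := by
  obtain ⟨N, hN⟩ := hu
  have h0 : (P ^ N).coeff 0 ≠ 0 := by
    rw [coeff_zero_eq_eval_zero, eval_pow, ← coeff_zero_eq_eval_zero]; exact pow_ne_zero _ hP
  have h1 : P ^ N ≠ 0 := by intro h; rw [h] at h0; simp at h0
  have h2 : (P ^ N).natTrailingDegree = 0 := natTrailingDegree_eq_zero.2 (Or.inr h0)
  funext n
  exact Back _ h1 u 0 (fun n _ => by rw [hN]; rfl) h n (by omega)

lemma Extend_aux (Q : ℚ[X]) (hQ : Q.coeff 0 ≠ 0) (n0 : ℕ) : ∀ (u : ℕ → ℚ),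
    (∀ n ≥ n0, aeval (Sh ℚ) Q u n = 0) → ∃ u' : ℕ → ℚ, aeval (Sh ℚ) Q u' = 0 ∧ ∀ n ≥ n0, u n = u' n := by
  induction n0 with
  | zero => intro u h; exact ⟨u, funext fun n => h n (by omega), fun _ _ => rfl⟩
  | succ n0 ih =>
    intro u h
    let u1 := Function.update u n0 (u n0 - aeval (Sh ℚ) Q u n0 / Q.coeff 0)
    have hu1 : ∀ m, m ≥ n0 + 1 → u1 m = u m := fun m hm => Function.update_of_ne (by omega) _ _
    obtain ⟨u', h1, h2⟩ := ih u1 (by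
      intro n hn
      rcases Nat.lt_or_ge n0 n with h3 | h3
      · rw [← h n h3]
        exact aeval_Sh_congr _ _ _ _ fun m hm => hu1 m (by omega)
      · obtain rfl : n = n0 := by omega
        have e1 := aeval_Sh Q u n _ (Nat.lt_succ_self _)
        rw [aeval_Sh Q u1 n _ (Nat.lt_succ_self _)]
        rw [Finset.sum_range_succ'] at e1 ⊢
        have e2 : ∀ k ∈ Finset.range Q.natDegree, Q.coeff (k + 1) * u1 (n + (k + 1)) = Q.coeff (k + 1) * u (n + (k + 1)) :=
          fun k _ => by rw [hu1 _ (by omega)]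
        rw [Finset.sum_congr rfl e2]
        have e3 : u1 (n + 0) = u n - aeval (Sh ℚ) Q u n / Q.coeff 0 := Function.update_self _ _ _
        rw [e3]
        have e4 : Q.coeff 0 * (u n - aeval (Sh ℚ) Q u n / Q.coeff 0) = Q.coeff 0 * u n - aeval (Sh ℚ) Q u n := by
          field_simp
        rw [e4]
        simp only [add_zero] at e1
        linarith)
    exact ⟨u', h1, fun n hn => by rw [← hu1 n hn, h2 n (by omega)]⟩

lemma EU_solve {P : ℚ[X]} (hP : P.coeff 0 ≠ 0) (χ : ℚ[X]) (m : ℕ) (hχ : χ ∣ X ^ m * P)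
    (u ρ : ℕ → ℚ) (hρ : ρ ∈ US P) (h : ∀ᶠ n in atTop, aeval (Sh ℚ) χ u n = ρ n) :
    ∃ u' ∈ US P, ∀ᶠ n in atTop, u n = u' n := by
  obtain ⟨N, hN⟩ := hρ
  obtain ⟨σ, hσ⟩ := hχ
  have h1 := aeval_Sh_ev (P ^ N * σ) _ _ h
  have e1 : aeval (Sh ℚ) (P ^ N * σ) ρ = 0 := by
    rw [mul_comm, map_mul, Module.End.mul_apply, hN, map_zero]
  rw [e1, ← Module.End.mul_apply, ← map_mul] at h1
  have e2 : P ^ N * σ * χ = X ^ m * P ^ (N + 1) := by rw [pow_succ]; linear_combination (- P ^ N) * hσ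
  rw [e2, map_mul, map_pow, aeval_X] at h1
  simp only [Module.End.mul_apply, Sh_pow] at h1
  obtain ⟨B, hB⟩ := eventually_atTop.1 h1
  have h0 : (P ^ (N + 1)).coeff 0 ≠ 0 := by
    rw [coeff_zero_eq_eval_zero, eval_pow, ← coeff_zero_eq_eval_zero]; exact pow_ne_zero _ hP
  obtain ⟨u', h2, h3⟩ := Extend_aux _ h0 (B + m) u (by
    intro n hn
    have := hB (n - m) (by omega)
    rwa [Nat.sub_add_cancel (by omega)] at this)
  exact ⟨u', ⟨N + 1, h2⟩, eventually_atTop.2 ⟨_, h3⟩⟩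

lemma PS {P : ℚ[X]} (hP : P.coeff 0 ≠ 0) (Ξ : ℕ → ℚ[X]) (e : ℕ) (hΞ : ∀ l, (Ξ l).natDegree ≤ e)
    (m : ℕ) (h0 : Ξ 0 ≠ 0) (hχ : Ξ 0 ∣ X ^ m * P) (v γ : ℕ → ℕ → ℚ) (hγ : ∀ ν, γ ν ∈ US P) (n1 : ℕ)
    (hv : ∀ ν, ∀ n ≥ n1 + ν, ∑ l ∈ Finset.range (ν + 1), aeval (Sh ℚ) (Ξ l) (v (ν - l)) n = γ ν n) :
    ∃ u : ℕ → ℕ → ℚ, (∀ ν, u ν ∈ US P) ∧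
      (∀ ν, ∀ n, ∑ l ∈ Finset.range (ν + 1), aeval (Sh ℚ) (Ξ l) (u (ν - l)) n = γ ν n) ∧
      ∃ C : ℕ, ∀ ν, ∀ n ≥ C + (e + 1) * ν, v ν n = u ν n := by
  have hEU : ∀ ν, ∃ u' ∈ US P, ∀ᶠ n in atTop, v ν n = u' n := by
    intro ν
    induction ν using Nat.strong_induction_on with
    | _ ν ih =>
      choose! u' hu' hvu using ih
      refine EU_solve hP (Ξ 0) m hχ (v ν)
        (γ ν - ∑ l ∈ Finset.range ν, aeval (Sh ℚ) (Ξ (l + 1)) (u' (ν - (l + 1)))) ?_ ?_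
      · refine Submodule.sub_mem _ (hγ ν) (Submodule.sum_mem _ fun l hl => US_aeval _ (hu' _ ?_))
        have := Finset.mem_range.1 hl; omega
      · have h1 : ∀ᶠ n in atTop, ∀ l ∈ Finset.range ν, aeval (Sh ℚ) (Ξ (l + 1)) (v (ν - (l + 1))) n =
            aeval (Sh ℚ) (Ξ (l + 1)) (u' (ν - (l + 1))) n := by
          rw [Filter.eventually_all_finset]
          intro l hl
          have := Finset.mem_range.1 hl
          exact aeval_Sh_ev _ _ _ (hvu _ (by omega))
        filter_upwards [h1, eventually_ge_atTop (n1 + ν)] with n hn hn2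
        have h2 := hv ν n hn2
        rw [Finset.sum_range_succ', Finset.sum_congr rfl hn] at h2
        simp only [Pi.sub_apply, Finset.sum_apply, ← h2]
        simp
  choose u hu hvu using hEU
  refine ⟨u, hu, ?_, n1 + e, ?_⟩
  · intro ν
    have h1 : (∑ l ∈ Finset.range (ν + 1), aeval (Sh ℚ) (Ξ l) (u (ν - l))) - γ ν = 0 := by
      refine US_eq_zero hP (Submodule.sub_mem _ (Submodule.sum_mem _ fun l _ => US_aeval _ (hu _)) (hγ ν)) ?_
      have h1 : ∀ᶠ n in atTop, ∀ l ∈ Finset.range (ν + 1), aeval (Sh ℚ) (Ξ l) (v (ν - l)) n =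
            aeval (Sh ℚ) (Ξ l) (u (ν - l)) n := by
        rw [Filter.eventually_all_finset]
        intro l hl
        exact aeval_Sh_ev _ _ _ (hvu _)
      filter_upwards [h1, eventually_ge_atTop (n1 + ν)] with n hn hn2
      have h2 := hv ν n hn2
      rw [Finset.sum_congr rfl hn] at h2
      simp [Finset.sum_apply, h2]
    intro n
    have := congrFun h1 n
    simp only [Pi.sub_apply, Finset.sum_apply, Pi.zero_apply] at this
    linarith
  · have hex : ∀ ν, ∀ n, ∑ l ∈ Finset.range (ν + 1), aeval (Sh ℚ) (Ξ l) (u (ν - l)) n = γ ν n := by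
      intro ν
      have h1 : (∑ l ∈ Finset.range (ν + 1), aeval (Sh ℚ) (Ξ l) (u (ν - l))) - γ ν = 0 := by
        refine US_eq_zero hP (Submodule.sub_mem _ (Submodule.sum_mem _ fun l _ => US_aeval _ (hu _)) (hγ ν)) ?_
        have h1 : ∀ᶠ n in atTop, ∀ l ∈ Finset.range (ν + 1), aeval (Sh ℚ) (Ξ l) (v (ν - l)) n =
              aeval (Sh ℚ) (Ξ l) (u (ν - l)) n := by
          rw [Filter.eventually_all_finset]
          intro l hl
          exact aeval_Sh_ev _ _ _ (hvu _)
        filter_upwards [h1, eventually_ge_atTop (n1 + ν)] with n hn hn2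
        have h2 := hv ν n hn2
        rw [Finset.sum_congr rfl hn] at h2
        simp [Finset.sum_apply, h2]
      intro n
      have := congrFun h1 n
      simp only [Pi.sub_apply, Finset.sum_apply, Pi.zero_apply] at this
      linarith
    intro ν
    induction ν using Nat.strong_induction_on with
    | _ ν ih =>
      have h3 : ∀ n ≥ n1 + (e + 1) * ν, aeval (Sh ℚ) (Ξ 0) (v ν - u ν) n = 0 := by
        intro n hn
        have h4 := hv ν n (hn.trans' (by nlinarith))
        rw [← hex ν n, Finset.sum_range_succ', Finset.sum_range_succ' _ ν] at h4
        have h5 : ∀ l ∈ Finset.range ν, aeval (Sh ℚ) (Ξ (l + 1)) (v (ν - (l + 1))) n =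
            aeval (Sh ℚ) (Ξ (l + 1)) (u (ν - (l + 1))) n := by
          intro l hl
          have hl := Finset.mem_range.1 hl
          refine aeval_Sh_congr _ _ _ _ fun k hk => ih _ (by omega) k ?_
          refine hk.trans' (hn.trans' ?_)
          obtain ⟨t, rfl⟩ : ∃ t, ν = t + 1 + l := ⟨ν - 1 - l, by omega⟩
          rw [show t + 1 + l - (l + 1) = t by omega]
          nlinarith
        rw [Finset.sum_congr rfl h5] at h4
        have h6 := add_left_cancel h4
        simp only [Nat.sub_zero] at h6
        rw [map_sub, Pi.sub_apply, h6, sub_self]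
      have h7 := Back _ h0 _ _ h3 (by
        filter_upwards [hvu ν] with n hn
        simp [hn])
      intro n hn
      have := h7 n (hn.trans' (by have := natTrailingDegree_le_natDegree (Ξ 0); have := hΞ 0; omega))
      simpa [sub_eq_zero] using this


abbrev KL := LaurentSeries ℚ

/-- valuation at least `c` -/
def Vge (x : KL) (c : ℚ) : Prop := ∀ i : ℤ, (i : ℚ) < c → x.coeff i = 0

/-- valuation exactly `a` -/
def Exact' (x : KL) (a : ℤ) : Prop := x.coeff a ≠ 0 ∧ ∀ i : ℤ, i < a → x.coeff i = 0

noncomputable def tp (m : ℤ) : KL := HahnSeries.single m 1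

lemma Vge_iff (x : KL) (c : ℚ) : Vge x c ↔ x = 0 ∨ c ≤ (x.order : ℚ) := by
  constructor
  · intro h
    by_cases hx : x = 0
    · exact Or.inl hx
    · right
      by_contra hc
      exact (HahnSeries.coeff_order_eq_zero.not.2 hx) (h _ (not_le.1 hc))
  · rintro (rfl | h) i hi
    · rfl
    · exact HahnSeries.coeff_eq_zero_of_lt_order (by exact_mod_cast lt_of_lt_of_le hi h)

lemma Exact'_iff (x : KL) (a : ℤ) : Exact' x a ↔ x ≠ 0 ∧ x.order = a := by
  constructor
  · rintro ⟨h1, h2⟩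
    have hx : x ≠ 0 := by rintro rfl; simp at h1
    refine ⟨hx, le_antisymm (HahnSeries.order_le_of_coeff_ne_zero h1) ?_⟩
    by_contra hc
    exact (HahnSeries.coeff_order_eq_zero.not.2 hx) (h2 _ (not_le.1 hc))
  · rintro ⟨h1, rfl⟩
    exact ⟨HahnSeries.coeff_order_eq_zero.not.2 h1, fun i hi => HahnSeries.coeff_eq_zero_of_lt_order hi⟩

lemma Vge_zero (c : ℚ) : Vge 0 c := fun _ _ => rfl
lemma Vge.mono {x : KL} {c d : ℚ} (h : Vge x c) (hd : d ≤ c) : Vge x d := fun i hi => h i (lt_of_lt_of_le hi hd)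
lemma Vge.add {x y : KL} {c : ℚ} (hx : Vge x c) (hy : Vge y c) : Vge (x + y) c := fun i hi => by
  rw [HahnSeries.coeff_add, hx i hi, hy i hi, add_zero]
lemma Vge.neg {x : KL} {c : ℚ} (hx : Vge x c) : Vge (-x) c := fun i hi => by
  rw [HahnSeries.coeff_neg, hx i hi, neg_zero]
lemma Vge.sub {x y : KL} {c : ℚ} (hx : Vge x c) (hy : Vge y c) : Vge (x - y) c := by
  rw [sub_eq_add_neg]; exact hx.add hy.neg
lemma Vge.sum {ι : Type*} {s : Finset ι} {x : ι → KL} {c : ℚ} (h : ∀ i ∈ s, Vge (x i) c) : Vge (∑ i ∈ s, x i) c :=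
  Finset.sum_induction _ (fun x => Vge x c) (fun _ _ => Vge.add) (Vge_zero c) h
lemma Vge.mul {x y : KL} {c d : ℚ} (hx : Vge x c) (hy : Vge y d) : Vge (x * y) (c + d) := by
  rw [Vge_iff] at *
  rcases hx with rfl | hx
  · left; simp
  rcases hy with rfl | hy
  · left; simp
  by_cases h1 : x = 0
  · left; simp [h1]
  by_cases h2 : y = 0
  · left; simp [h2]
  right
  rw [HahnSeries.order_mul h1 h2]; push_cast; linarith
lemma Exact'.vge {x : KL} {a : ℤ} (h : Exact' x a) : Vge x a := fun i hi => h.2 i (by exact_mod_cast hi)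
lemma Exact'.mul {x y : KL} {a b : ℤ} (h : Exact' x a) (h' : Exact' y b) : Exact' (x * y) (a + b) := by
  rw [Exact'_iff] at *
  exact ⟨mul_ne_zero h.1 h'.1, by rw [HahnSeries.order_mul h.1 h'.1, h.2, h'.2]⟩
lemma Exact'.div {b x : KL} {a : ℤ} {c : ℚ} (h : Exact' b a) (hx : Vge (b * x) (a + c)) : Vge x c := by
  rw [Exact'_iff] at h
  rw [Vge_iff] at *
  rcases hx with h1 | h1
  · left; exact (mul_eq_zero.1 h1).resolve_left h.1
  · by_cases h2 : x = 0
    · exact Or.inl h2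
    right
    rw [HahnSeries.order_mul h.1 h2, h.2] at h1; push_cast at h1; linarith
lemma Vge_zero_of_all {x : KL} (h : ∀ c : ℚ, Vge x c) : x = 0 := by
  ext i; exact h (i + 1) i (by linarith)
lemma exists_Vge (x : KL) : ∃ c : ℤ, Vge x c := ⟨x.order, (Vge_iff _ _).2 (Or.inr le_rfl)⟩

lemma tp_mul (a b : ℤ) : tp a * tp b = tp (a + b) := by simp [tp]
lemma tp_zero : tp 0 = 1 := rfl
lemma tp_ne (a : ℤ) : tp a ≠ 0 := by simp [tp]
lemma coeff_tp_mul (m : ℤ) (x : KL) (i : ℤ) : (tp m * x).coeff i = x.coeff (i - m) := by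
  simp [tp, HahnSeries.coeff_single_mul]
lemma tp_exact (a : ℤ) : Exact' (tp a) a := by
  rw [Exact'_iff]; exact ⟨tp_ne a, by simp [tp]⟩
lemma tp_pow (a : ℤ) (n : ℕ) : tp a ^ n = tp (n * a) := by
  induction n with
  | zero => simp [tp_zero]
  | succ n ih => rw [pow_succ, ih, tp_mul]; congr 1; push_cast; ring
lemma Vge_tp {m : ℤ} {x : KL} {c : ℚ} : Vge (tp m * x) (m + c) ↔ Vge x c :=
  ⟨fun h => (tp_exact m).div h, fun h => (tp_exact m).vge.mul h⟩
lemma Exact'_tp {m : ℤ} {x : KL} {c : ℤ} (h : Exact' x c) : Exact' (tp m * x) (m + c) := (tp_exact m).mul h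

/-- Laurent series with given coefficients starting from `a` -/
noncomputable def lser (a : ℤ) (u : ℕ → ℚ) : KL := tp a * HahnSeries.ofPowerSeries ℤ ℚ (PowerSeries.mk u)

lemma lser_coeff (a : ℤ) (u : ℕ → ℚ) (n : ℕ) : (lser a u).coeff (a + n) = u n := by
  rw [lser, coeff_tp_mul, add_sub_cancel_left, HahnSeries.ofPowerSeries_apply_coeff, PowerSeries.coeff_mk]

lemma lser_vge (a : ℤ) (u : ℕ → ℚ) : ∀ i < a, (lser a u).coeff i = 0 := by
  intro i hi
  rw [lser, coeff_tp_mul, HahnSeries.ofPowerSeries_apply, HahnSeries.embDomain_of_notMem_range]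
  simp only [Set.mem_range, not_exists]
  intro x hx
  have : (x : ℤ) = i - a := hx
  omega

lemma lser_eq (a : ℤ) (x : KL) (hx : ∀ i < a, x.coeff i = 0) : x = lser a (fun n => x.coeff (a + n)) := by
  ext i
  rcases lt_or_ge i a with h | h
  · rw [hx i h, lser_vge a _ i h]
  · obtain ⟨n, rfl⟩ : ∃ n : ℕ, i = a + n := ⟨(i - a).toNat, by omega⟩
    rw [lser_coeff]

lemma lser_mul (a b : ℤ) (u v : ℕ → ℚ) :
    lser a u * lser b v = lser (a + b) (fun n => ∑ l ∈ Finset.range (n + 1), u l * v (n - l)) := by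
  rw [lser, lser, mul_mul_mul_comm, tp_mul, ← map_mul, lser]
  congr 2
  ext n
  rw [PowerSeries.coeff_mul, PowerSeries.coeff_mk,
    Finset.Nat.sum_antidiagonal_eq_sum_range_succ (fun i j => (PowerSeries.coeff i) (PowerSeries.mk u) * (PowerSeries.coeff j) (PowerSeries.mk v))]
  simp

lemma conv_coeff (a b : ℤ) (x y : KL) (hx : ∀ i < a, x.coeff i = 0) (hy : ∀ i < b, y.coeff i = 0) (n : ℕ) :
    (x * y).coeff (a + b + n) = ∑ l ∈ Finset.range (n + 1), x.coeff (a + l) * y.coeff (b + (n - l : ℕ)) := by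
  conv_lhs => rw [lser_eq a x hx, lser_eq b y hy, lser_mul, lser_coeff]

lemma Exact'.add_small {x y : KL} {a : ℤ} {c : ℚ} (h : Exact' x a) (hy : Vge y c) (hc : (a : ℚ) < c) :
    Exact' (x + y) a := by
  refine ⟨?_, fun i hi => ?_⟩
  · rw [HahnSeries.coeff_add, hy a hc, add_zero]; exact h.1
  · rw [HahnSeries.coeff_add, h.2 i hi, hy i (lt_trans (by exact_mod_cast hi) hc), add_zero]

lemma Up (e : ℕ) (b : ℕ → ℕ → KL) (h g : ℕ → KL) (N ks : ℕ) (hks : ks ≤ e) (Bs : ℕ → ℤ)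
    (φ ψ : ℕ → ℚ) (ε : ℚ) (hε : 0 < ε)
    (hrec : ∀ n ≥ N, ∑ k ∈ Finset.range (e + 1), b k n * h (n + k) = g n)
    (hex : ∀ n ≥ N, Exact' (b ks n) (Bs n))
    (hk : ∀ n ≥ N, ∀ k ≤ e, k ≠ ks → b k n = 0 ∨ ∃ B : ℚ, Vge (b k n) B ∧
      Bs n + φ (n + ks) + ε ≤ B + φ (n + k) ∧ Bs n + ψ (n + ks) ≤ B + ψ (n + k))
    (hg : ∀ n ≥ N, Vge (g n) (Bs n + ψ (n + ks)))
    (hφ : ∀ n ≥ N, Vge (h n) (φ n))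
    (hψ : ∀ n ≥ N, n < N + ks → Vge (h n) (ψ n)) :
    ∀ n ≥ N, Vge (h n) (ψ n) := by
  have key : ∀ i : ℕ, ∀ n ≥ N, Vge (h n) (min (ψ n) (φ n + i * ε)) := by
    intro i
    induction i with
    | zero => intro n hn; exact (hφ n hn).mono (by simp)
    | succ i ih =>
      intro n hn
      by_cases hn2 : n < N + ks
      · exact (hψ n hn hn2).mono (min_le_left _ _)
      obtain ⟨m, rfl⟩ : ∃ m, n = m + ks := ⟨n - ks, by omega⟩
      have hm : m ≥ N := by omega
      refine (hex m hm).div ?_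
      have h1 := hrec m hm
      rw [← Finset.add_sum_erase _ _ (Finset.mem_range.2 (Nat.lt_succ_of_le hks))] at h1
      rw [eq_sub_of_add_eq h1]
      refine Vge.sub ((hg m hm).mono (by have := min_le_left (ψ (m + ks)) (φ (m + ks) + (i + 1 : ℕ) * ε); linarith)) ?_
      refine Vge.sum fun k hkm => ?_
      rw [Finset.mem_erase, Finset.mem_range] at hkm
      rcases hk m hm k (by omega) hkm.1 with h0 | ⟨B, hB, h2, h3⟩
      · rw [h0, zero_mul]; exact Vge_zero _
      · refine (hB.mul (ih (m + k) (by omega))).mono ?_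
        rw [← min_add_add_left, ← min_add_add_left]
        refine le_min ((min_le_left _ _).trans h3) ((min_le_right _ _).trans ?_)
        push_cast; linarith
  intro n hn
  obtain ⟨i, hi⟩ := exists_nat_ge ((ψ n - φ n) / ε)
  rw [div_le_iff₀ hε] at hi
  refine (key i n hn).mono (le_min le_rfl (by linarith))

lemma comb (I : Finset ℕ) (hI : I.Nonempty) (A : ℕ → ℤ)
    (hdiv : ∀ k ∈ I, ∀ k' ∈ I, ((k : ℤ) - k') ∣ A k - A k') (s : ℤ) :
    ∃ ks ∈ I, ∀ k ∈ I, A ks + s * ks ≤ A k + s * k ∧ A ks + (s + 1) * ks ≤ A k + (s + 1) * k := by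
  obtain ⟨ks, hks, hmin⟩ := I.exists_min_image (fun k => toLex (A k + s * k, k)) hI
  refine ⟨ks, hks, fun k hk => ?_⟩
  have h1 := hmin k hk
  rw [Prod.Lex.toLex_le_toLex] at h1
  simp only at h1
  rcases h1 with h1 | ⟨h1, h2⟩
  · refine ⟨h1.le, ?_⟩
    obtain ⟨t, ht⟩ := hdiv k hk ks hks
    have h3 : (A k + s * k) - (A ks + s * ks) = (k - ks) * (t + s) := by linear_combination ht
    have h4 : 0 < ((k : ℤ) - ks) * (t + s) := by rw [← h3]; linarith
    have h5 : -((k : ℤ) - ks) ≤ ((k : ℤ) - ks) * (t + s) := by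
      rcases le_or_gt 0 ((k : ℤ) - ks) with h6 | h6
      · linarith
      · have : t + s < 0 := by by_contra hc; nlinarith
        nlinarith
    linarith
  · refine ⟨h1.le, ?_⟩
    have : (ks : ℤ) ≤ k := by exact_mod_cast h2
    linarith

lemma comb_strict (A A' : ℤ) (s : ℤ) (k ks : ℕ) (hne : k ≠ ks) (θ : ℚ) (h0 : 0 < θ) (h1 : θ ≤ 1 / 2)
    (h : A + s * ks ≤ A' + s * k ∧ A + (s + 1) * ks ≤ A' + (s + 1) * k) :
    (A : ℚ) + (s + θ) * ks + θ ≤ A' + (s + θ) * k := by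
  obtain ⟨h2, h3⟩ := h
  obtain ⟨D, hD⟩ : ∃ D, D = A' + s * k - (A + s * ks) := ⟨_, rfl⟩
  have hD0 : 0 ≤ D := by linarith
  have hD1 : 0 ≤ D + (k - ks) := by linarith
  have hk : (k : ℤ) - ks ≠ 0 := by omega
  have hD' : (A' : ℚ) - A + s * k - s * ks = D := by rw [hD]; push_cast; ring
  have hsum : (1 : ℤ) ≤ D ∨ (1 : ℤ) ≤ D + (k - ks) := by omega
  have hD0' : (0 : ℚ) ≤ D := by exact_mod_cast hD0
  have hD1' : (0 : ℚ) ≤ D + (k - ks) := by exact_mod_cast hD1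
  have : (A' : ℚ) + (s + θ) * k - (A + (s + θ) * ks) = (1 - θ) * D + θ * (D + (k - ks)) := by
    rw [← hD']; ring
  rcases hsum with h | h
  · have : (1 : ℚ) ≤ D := by exact_mod_cast h
    nlinarith
  · have : (1 : ℚ) ≤ D + (k - ks) := by exact_mod_cast h
    nlinarith


noncomputable def YS (P : ℚ[X]) : AddSubgroup (ℕ → KL) where
  carrier := {y | (∃ C : ℤ, ∀ n, ∀ i < C, (y n).coeff i = 0) ∧ ∀ i, (fun n => (y n).coeff i) ∈ US P}
  zero_mem' := ⟨⟨0, fun _ _ _ => rfl⟩, fun _ => (US P).zero_mem⟩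
  add_mem' := by
    rintro a b ⟨⟨A, hA⟩, ha⟩ ⟨⟨B, hB⟩, hb⟩
    refine ⟨⟨min A B, fun n i hi => ?_⟩, fun i => ?_⟩
    · rw [Pi.add_apply, HahnSeries.coeff_add, hA n i (lt_of_lt_of_le hi (min_le_left _ _)),
        hB n i (lt_of_lt_of_le hi (min_le_right _ _)), add_zero]
    · exact (US P).add_mem (ha i) (hb i)
  neg_mem' := by
    rintro a ⟨⟨A, hA⟩, ha⟩
    refine ⟨⟨A, fun n i hi => ?_⟩, fun i => ?_⟩
    · rw [Pi.neg_apply, HahnSeries.coeff_neg, hA n i hi, neg_zero]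
    · exact (US P).neg_mem (ha i)

lemma YS_const_mul {P : ℚ[X]} {y : ℕ → KL} (hy : y ∈ YS P) (c : KL) : (fun n => c * y n) ∈ YS P := by
  obtain ⟨⟨B, hB⟩, hb⟩ := hy
  obtain ⟨a, ha⟩ := exists_Vge c
  have ha' : ∀ i < a, c.coeff i = 0 := fun i hi => ha i (by exact_mod_cast hi)
  have hz : ∀ n, ∀ i < a + B, (c * y n).coeff i = 0 := by
    intro n i hi
    have h2 : Vge (y n) B := fun i hi => hB n i (by exact_mod_cast hi)
    exact (ha.mul h2) i (by exact_mod_cast hi)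
  refine ⟨⟨a + B, hz⟩, fun i => ?_⟩
  rcases lt_or_ge i (a + B) with h | h
  · have : (fun n => (c * y n).coeff i) = 0 := funext fun n => hz n i h
    rw [this]; exact (US P).zero_mem
  · obtain ⟨m, rfl⟩ : ∃ m : ℕ, i = a + B + m := ⟨(i - (a + B)).toNat, by omega⟩
    have : (fun n => (c * y n).coeff (a + B + m)) =
        ∑ l ∈ Finset.range (m + 1), c.coeff (a + l) • (fun n => (y n).coeff (B + (m - l : ℕ))) := by
      funext n
      rw [conv_coeff a B c (y n) ha' (hB n)]
      simp [Finset.sum_apply]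
    rw [this]
    exact Submodule.sum_mem _ fun l _ => (US P).smul_mem _ (hb _)

lemma YS_shift {P : ℚ[X]} {y : ℕ → KL} (hy : y ∈ YS P) (k : ℕ) : (fun n => y (n + k)) ∈ YS P := by
  obtain ⟨⟨B, hB⟩, hb⟩ := hy
  exact ⟨⟨B, fun n i hi => hB _ i hi⟩, fun i => US_shift k (hb i)⟩

/-- constant sequences -/
def CS : AddSubgroup (ℕ → KL) where
  carrier := {y | ∃ c, y = fun _ => c}
  zero_mem' := ⟨0, rfl⟩
  add_mem' := by rintro _ _ ⟨a, rfl⟩ ⟨b, rfl⟩; exact ⟨a + b, rfl⟩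
  neg_mem' := by rintro _ ⟨a, rfl⟩; exact ⟨-a, rfl⟩

noncomputable def GG (Y : AddSubgroup (ℕ → KL)) (w : ℤ) : AddSubgroup (ℕ → KL) :=
  AddSubgroup.closure {g | ∃ j ≥ w, ∃ y ∈ Y, g = fun n : ℕ => tp (j * n) * y n}

lemma GG_gen {Y : AddSubgroup (ℕ → KL)} {w j : ℤ} (hj : w ≤ j) {y : ℕ → KL} (hy : y ∈ Y) :
    (fun n : ℕ => tp (j * n) * y n) ∈ GG Y w := AddSubgroup.subset_closure ⟨j, hj, y, hy, rfl⟩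

lemma GG_split {Y : AddSubgroup (ℕ → KL)} {w : ℤ} {g : ℕ → KL} (hg : g ∈ GG Y w) :
    ∃ y ∈ Y, ∃ g' ∈ GG Y (w + 1), ∀ n : ℕ, g n = tp (w * n) * y n + g' n := by
  refine AddSubgroup.closure_induction (p := fun g _ => ∃ y ∈ Y, ∃ g' ∈ GG Y (w + 1), ∀ n : ℕ, g n = tp (w * n) * y n + g' n)
    ?_ ?_ ?_ ?_ hg
  · rintro _ ⟨j, hj, y, hy, rfl⟩
    rcases eq_or_lt_of_le hj with rfl | h
    · exact ⟨y, hy, 0, AddSubgroup.zero_mem _, fun n => by simp⟩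
    · exact ⟨0, Y.zero_mem, _, GG_gen (show w + 1 ≤ j by omega) hy, fun n => by simp⟩
  · exact ⟨0, Y.zero_mem, 0, AddSubgroup.zero_mem _, fun n => by simp⟩
  · rintro a b _ _ ⟨y, hy, g, hg, h⟩ ⟨y', hy', g', hg', h'⟩
    exact ⟨y + y', Y.add_mem hy hy', g + g', AddSubgroup.add_mem _ hg hg', fun n => by
      simp only [Pi.add_apply, h, h']; ring⟩
  · rintro a _ ⟨y, hy, g, hg, h⟩
    exact ⟨-y, Y.neg_mem hy, -g, AddSubgroup.neg_mem _ hg, fun n => by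
      simp only [Pi.neg_apply, h]; ring⟩

lemma GG_bound {Y : AddSubgroup (ℕ → KL)} (hY : ∀ y ∈ Y, ∃ C : ℚ, ∀ n, Vge (y n) C) {w : ℤ} {g : ℕ → KL} (hg : g ∈ GG Y w) :
    ∃ C : ℚ, ∀ n : ℕ, Vge (g n) (w * n - C) := by
  refine AddSubgroup.closure_induction (p := fun g _ => ∃ C : ℚ, ∀ n : ℕ, Vge (g n) (w * n - C)) ?_ ?_ ?_ ?_ hg
  · rintro _ ⟨j, hj, y, hy, rfl⟩
    obtain ⟨C, hC⟩ := hY y hy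
    refine ⟨-C, fun n => (((tp_exact (j * n)).vge).mul (hC n)).mono ?_⟩
    have : (w : ℚ) * n ≤ j * n := by
      have : (w : ℚ) ≤ j := by exact_mod_cast hj
      gcongr
    push_cast; linarith
  · exact ⟨0, fun n => Vge_zero _⟩
  · rintro a b _ _ ⟨A, hA⟩ ⟨B, hB⟩
    exact ⟨max A B, fun n => ((hA n).mono (by have := le_max_left A B; linarith)).add
      ((hB n).mono (by have := le_max_right A B; linarith))⟩
  · rintro a _ ⟨A, hA⟩
    exact ⟨A, fun n => (hA n).neg⟩

lemma YS_bound {P : ℚ[X]} : ∀ y ∈ YS P, ∃ C : ℚ, ∀ n, Vge (y n) C := by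
  rintro y ⟨⟨C, hC⟩, -⟩
  exact ⟨C, fun n i hi => hC n i (by exact_mod_cast hi)⟩

lemma CS_bound : ∀ y ∈ CS, ∃ C : ℚ, ∀ n, Vge (y n) C := by
  rintro y ⟨c, rfl⟩
  obtain ⟨a, ha⟩ := exists_Vge c
  exact ⟨a, fun n => ha⟩

lemma GG_mul_aux {P : ℚ[X]} {i j i' : ℤ} (hi' : i ≤ i') (c : KL) {g : ℕ → KL} (hg : g ∈ GG (YS P) j) (k : ℕ) :
    (fun n : ℕ => (tp (i' * n) * c) * g (n + k)) ∈ GG (YS P) (i + j) := by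
  unfold GG at hg
  induction hg using AddSubgroup.closure_induction with
  | mem x hx =>
    obtain ⟨j', hj', y, hy, rfl⟩ := hx
    have := GG_gen (show i + j ≤ i' + j' by omega) (YS_const_mul (YS_shift hy k) (c * tp (j' * k)))
    convert this using 1
    funext n
    have e1 : tp (j' * ((n + k : ℕ) : ℤ)) = tp (j' * n) * tp (j' * k) := by
      rw [tp_mul]; congr 1; push_cast; ring
    have e2 : tp ((i' + j') * n) = tp (i' * n) * tp (j' * n) := by
      rw [tp_mul]; congr 1; ring
    beta_reduce
    rw [e1, e2]; ring
  | zero =>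
    convert (GG (YS P) (i + j)).zero_mem using 1
    funext n; simp
  | add a b _ _ ha hb =>
    convert AddSubgroup.add_mem _ ha hb using 1
    funext n; simp [mul_add]
  | neg a _ ha =>
    convert AddSubgroup.neg_mem _ ha using 1
    funext n; simp

lemma GG_mul {P : ℚ[X]} {i j : ℤ} {b g : ℕ → KL} (hb : b ∈ GG CS i) (hg : g ∈ GG (YS P) j) (k : ℕ) :
    (fun n => b n * g (n + k)) ∈ GG (YS P) (i + j) := by
  unfold GG at hb
  induction hb using AddSubgroup.closure_induction with
  | mem x hx =>
    obtain ⟨i', hi', _, ⟨c, rfl⟩, rfl⟩ := hx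
    exact GG_mul_aux hi' c hg k
  | zero =>
    convert (GG (YS P) (i + j)).zero_mem using 1
    funext n; simp
  | add a b _ _ ha hb =>
    convert AddSubgroup.add_mem _ ha hb using 1
    funext n; simp [add_mul]
  | neg a _ ha =>
    convert AddSubgroup.neg_mem _ ha using 1
    funext n; simp


/-- the hypotheses on the normalised operator -/
structure Oper (P : ℚ[X]) (e : ℕ) (b : ℕ → ℕ → KL) (c0 : ℕ → KL) (m : ℕ) : Prop where
  hP : P.coeff 0 ≠ 0
  hb : ∀ k ≤ e, (fun n => b k n - c0 k) ∈ GG CS 1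
  hc : ∃ k ≤ e, c0 k ≠ 0
  hdiv : ∀ k ≤ e, ∀ k' ≤ e, c0 k ≠ 0 → c0 k' ≠ 0 → ((k : ℤ) - k') ∣ (c0 k).order - (c0 k').order
  hχ : ∀ S : Finset ℕ, S.Nonempty → (∀ k ∈ S, k ≤ e ∧ c0 k ≠ 0) →
    (∑ k ∈ S, C ((c0 k).coeff (c0 k).order) * X ^ k) ∣ X ^ m * P

/-- first half of the step: find the formal solution -/
lemma Step1 {P : ℚ[X]} {e : ℕ} {c0 : ℕ → KL} {m : ℕ} (hP : P.coeff 0 ≠ 0)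
    (hc : ∃ k ≤ e, c0 k ≠ 0)
    (hχ : ∀ S : Finset ℕ, S.Nonempty → (∀ k ∈ S, k ≤ e ∧ c0 k ≠ 0) →
      (∑ k ∈ S, C ((c0 k).coeff (c0 k).order) * X ^ k) ∣ X ^ m * P)
    (w : ℤ) (y0 γ err : ℕ → KL) (C1 C2 : ℚ) (N : ℕ) (hγ : γ ∈ YS P)
    (hy0 : ∀ n ≥ N, Vge (y0 n) (- C1)) (herr : ∀ n ≥ N, Vge (err n) (n - C2))
    (heq : ∀ n ≥ N, ∑ k ∈ Finset.range (e + 1), c0 k * tp (w * k) * y0 (n + k) = γ n + err n) :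
    ∃ y ∈ YS P, (∀ n, ∑ k ∈ Finset.range (e + 1), c0 k * tp (w * k) * y (n + k) = γ n) ∧
      ∃ C3 : ℚ, ∀ n ≥ N, Vge (y0 n - y n) ((1 / (e + 2 : ℚ)) * n - C3) := by
  classical
  set c : ℕ → KL := fun k => c0 k * tp (w * k) with hcdef
  have hcc : ∀ k i, (c k).coeff i = (c0 k).coeff (i - w * k) := by
    intro k i; rw [hcdef]; simp only; rw [mul_comm, coeff_tp_mul]
  set I : Finset ℕ := (Finset.range (e + 1)).filter (fun k => c0 k ≠ 0) with hI
  have hIne : I.Nonempty := by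
    obtain ⟨k, hk, h⟩ := hc
    exact ⟨k, by simp [hI, h]; omega⟩
  obtain ⟨k0, hk0, hmin⟩ := I.exists_min_image (fun k => (c0 k).order + w * k) hIne
  set μ : ℤ := (c0 k0).order + w * k0 with hμ
  have hcμ : ∀ k ∈ Finset.range (e + 1), ∀ i < μ, (c k).coeff i = 0 := by
    intro k hk i hi
    rw [hcc]
    by_cases h : c0 k = 0
    · rw [h]; rfl
    · have := hmin k (by rw [hI, Finset.mem_filter]; exact ⟨hk, h⟩)
      exact HahnSeries.coeff_eq_zero_of_lt_order (by linarith)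
  set Ξ : ℕ → ℚ[X] := fun l => ∑ k ∈ Finset.range (e + 1), C ((c k).coeff (μ + l)) * X ^ k with hΞ
  have hΞdeg : ∀ l, (Ξ l).natDegree ≤ e := by
    intro l
    refine natDegree_sum_le_of_forall_le _ _ fun k hk => (natDegree_C_mul_X_pow_le _ _).trans ?_
    have := Finset.mem_range.1 hk; omega
  have hΞa : ∀ l u n, aeval (Sh ℚ) (Ξ l) u n = ∑ k ∈ Finset.range (e + 1), (c k).coeff (μ + l) * u (n + k) := by
    intro l u n
    rw [hΞ]; simp only [map_sum, LinearMap.sum_apply, Finset.sum_apply, aeval_Sh_monomial]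
  set S : Finset ℕ := I.filter (fun k => (c0 k).order + w * k = μ) with hS
  have hΞ0 : Ξ 0 = ∑ k ∈ S, C ((c0 k).coeff (c0 k).order) * X ^ k := by
    rw [hΞ]; simp only
    symm
    have hsub : S ⊆ Finset.range (e + 1) := (Finset.filter_subset _ _).trans (Finset.filter_subset _ _)
    rw [← Finset.sum_subset hsub]
    · refine Finset.sum_congr rfl fun k hk => ?_
      have h1 := (Finset.mem_filter.1 hk).2
      rw [hcc, ← h1]; simp
    · intro k hk hkS
      rw [hcc]
      by_cases h : c0 k = 0
      · rw [h]; simp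
      · have hkI : k ∈ I := by rw [hI, Finset.mem_filter]; exact ⟨hk, h⟩
        have h1 := hmin k hkI
        have h2 : (c0 k).order + w * k ≠ μ := fun h3 => hkS (Finset.mem_filter.2 ⟨hkI, h3⟩)
        have h3 : μ < (c0 k).order + w * k := lt_of_le_of_ne h1 (Ne.symm h2)
        rw [HahnSeries.coeff_eq_zero_of_lt_order (by push_cast; linarith)]; simp
  have hSne : S.Nonempty := ⟨k0, Finset.mem_filter.2 ⟨hk0, rfl⟩⟩
  have hSI : ∀ k ∈ S, k ≤ e ∧ c0 k ≠ 0 := by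
    intro k hk
    have h1 := Finset.mem_filter.1 (Finset.mem_filter.1 hk).1
    exact ⟨by have := Finset.mem_range.1 h1.1; omega, h1.2⟩
  have hχd : Ξ 0 ∣ X ^ m * P := by rw [hΞ0]; exact hχ S hSne hSI
  have hXP : X ^ m * P ≠ 0 := mul_ne_zero (pow_ne_zero _ X_ne_zero) (by rintro rfl; simp at hP)
  have hΞ00 : Ξ 0 ≠ 0 := by rintro h; rw [h, zero_dvd_iff] at hχd; exact hXP hχd
  obtain ⟨⟨G, hG⟩, hγU⟩ := hγ
  obtain ⟨D1, hD1⟩ := exists_int_lt (- C1)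
  set C0 : ℤ := min D1 (G - μ) with hC0
  have hy0' : ∀ n ≥ N, ∀ i < C0, (y0 n).coeff i = 0 := by
    intro n hn i hi
    refine hy0 n hn i ?_
    have : i < D1 := lt_of_lt_of_le hi (min_le_left _ _)
    have : (i : ℚ) < D1 := by exact_mod_cast this
    linarith
  have hG' : ∀ n, ∀ i < μ + C0, (γ n).coeff i = 0 := by
    intro n i hi
    refine hG n i ?_
    have := min_le_right D1 (G - μ)
    omega
  obtain ⟨n2, hn2⟩ := exists_nat_gt (μ + C0 + C2)
  obtain ⟨u, hu, hue, Cp, hCp⟩ := PS hP Ξ e hΞdeg m hΞ00 hχd (fun ν n => (y0 n).coeff (C0 + ν))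
    (fun ν n => (γ n).coeff (μ + C0 + ν)) (fun ν => hγU _) (N + n2) (by
      intro ν n hn
      have h1 := congrArg (fun x => HahnSeries.coeff x (μ + C0 + ν)) (heq n (by omega))
      simp only [HahnSeries.coeff_add, HahnSeries.coeff_sum] at h1
      rw [herr n (by omega) (μ + C0 + ν) (by
        have : ((N + n2 + ν : ℕ) : ℚ) ≤ n := by exact_mod_cast hn
        push_cast at this ⊢
        have : (0 : ℚ) ≤ N := by positivity
        linarith), add_zero] at h1
      rw [← h1]
      simp only [hΞa]
      rw [Finset.sum_comm]
      refine Finset.sum_congr rfl fun k hk => ?_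
      rw [conv_coeff μ C0 (c k) (y0 (n + k)) (hcμ k hk) (hy0' _ (by omega))])
  have hyc : ∀ n (i : ℕ), (lser C0 (fun ν => u ν n)).coeff (C0 + i) = u i n := fun n i => lser_coeff _ _ _
  refine ⟨fun n => lser C0 (fun ν => u ν n), ⟨⟨C0, fun n => lser_vge _ _⟩, fun i => ?_⟩, fun n => ?_, Cp - C0, ?_⟩
  · rcases lt_or_ge i C0 with h | h
    · convert (US P).zero_mem using 1
      funext n; exact lser_vge _ _ i h
    · obtain ⟨t, rfl⟩ : ∃ t : ℕ, i = C0 + t := ⟨(i - C0).toNat, by omega⟩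
      simp only [hyc]; exact hu t
  · ext i
    rw [HahnSeries.coeff_sum]
    rcases lt_or_ge i (μ + C0) with h | h
    · rw [hG' n i h]
      refine Finset.sum_eq_zero fun k hk => ?_
      have v1 : Vge (c k) μ := fun i hi => hcμ k hk i (by exact_mod_cast hi)
      have v2 : Vge (lser C0 (fun ν => u ν (n + k))) C0 := fun i hi => lser_vge _ _ i (by exact_mod_cast hi)
      exact (v1.mul v2) i (by exact_mod_cast h)
    · obtain ⟨t, rfl⟩ : ∃ t : ℕ, i = μ + C0 + t := ⟨(i - (μ + C0)).toNat, by omega⟩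
      rw [← hue t n]
      simp only [hΞa]
      rw [Finset.sum_comm]
      refine Finset.sum_congr rfl fun k hk => ?_
      rw [conv_coeff μ C0 (c k) _ (hcμ k hk) (lser_vge _ _)]
      simp only [hyc]
  · intro n hn i hi
    rw [HahnSeries.coeff_sub]
    rcases lt_or_ge i C0 with h | h
    · rw [hy0' n hn i h, lser_vge _ _ i h, sub_zero]
    · obtain ⟨t, rfl⟩ : ∃ t : ℕ, i = C0 + t := ⟨(i - C0).toNat, by omega⟩
      rw [hyc, sub_eq_zero]
      refine hCp t n ?_
      have he : (0 : ℚ) < e + 2 := by positivity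
      push_cast at hi
      have h2 : (t : ℚ) + Cp < 1 / (e + 2) * n := by linarith
      rw [one_div, inv_mul_eq_div, lt_div_iff₀ he] at h2
      have h3 : (Cp : ℚ) + (e + 1) * t ≤ n := by
        have : (0 : ℚ) ≤ Cp := by positivity
        have : (0 : ℚ) ≤ t := by positivity
        have : (0 : ℚ) ≤ e * Cp := by positivity
        nlinarith
      exact_mod_cast h3


lemma Step {P : ℚ[X]} {e : ℕ} {b : ℕ → ℕ → KL} {c0 : ℕ → KL} {m : ℕ} (O : Oper P e b c0 m)
    (h g : ℕ → KL) (w : ℤ) (C : ℚ) (N : ℕ) (hg : g ∈ GG (YS P) w)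
    (hv : ∀ n ≥ N, Vge (h n) (w * n - C))
    (hrec : ∀ n ≥ N, ∑ k ∈ Finset.range (e + 1), b k n * h (n + k) = g n) :
    ∃ y ∈ YS P, ∃ g' ∈ GG (YS P) (w + 1), ∃ C' : ℚ, ∃ N' : ℕ, ∀ n ≥ N',
      Vge (h n - tp (w * n) * y n) ((w + 1) * n - C') ∧
      ∑ k ∈ Finset.range (e + 1), b k n * (h (n + k) - tp (w * (n + k : ℕ)) * y (n + k)) = g' n := by
  classical
  obtain ⟨γ, hγ, g1, hg1, hgs⟩ := GG_split hg
  set r : ℕ → ℕ → KL := fun k n => b k n - c0 k with hr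
  have hrb : ∃ C1 : ℚ, ∀ k ≤ e, ∀ n : ℕ, Vge (r k n) (n - C1) := by
    have : ∀ k, ∃ C1 : ℚ, k ≤ e → ∀ n : ℕ, Vge (r k n) (n - C1) := by
      intro k
      by_cases hk : k ≤ e
      · obtain ⟨C1, h1⟩ := GG_bound CS_bound (O.hb k hk)
        exact ⟨C1, fun _ n => by simpa using h1 n⟩
      · exact ⟨0, fun h => absurd h hk⟩
    choose C1 hC1 using this
    refine ⟨∑ k ∈ Finset.range (e + 1), |C1 k|, fun k hk n => (hC1 k hk n).mono ?_⟩
    have h1 := Finset.single_le_sum (f := fun k => |C1 k|) (fun i _ => abs_nonneg _) (Finset.mem_range.2 (Nat.lt_succ_of_le hk))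
    have h2 := le_abs_self (C1 k)
    linarith
  obtain ⟨C1, hC1⟩ := hrb
  obtain ⟨G1, hG1⟩ := GG_bound YS_bound hg1
  set y0 : ℕ → KL := fun n => tp (-(w * n)) * h n with hy0
  have htt : ∀ a : ℤ, tp (-a) * tp a = 1 := fun a => by rw [tp_mul, neg_add_cancel, tp_zero]
  have htk : ∀ n k : ℕ, tp (w * (n + k : ℕ)) = tp (w * n) * tp (w * k) := fun n k => by
    rw [tp_mul]; congr 1; push_cast; ring
  have hhy : ∀ n, h n = tp (w * n) * y0 n := by
    intro n; rw [hy0]; simp only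
    rw [← mul_assoc, mul_comm (tp _) (tp (-_)), htt, one_mul]
  have hy0v : ∀ n ≥ N, Vge (y0 n) (-C) := by
    intro n hn
    have := hv n hn
    rw [hhy] at this
    refine (Vge_tp (m := w * n)).1 ?_
    refine this.mono (by push_cast; linarith)
  set err : ℕ → KL := fun n => tp (-(w * n)) * g1 n -
    ∑ k ∈ Finset.range (e + 1), r k n * (tp (w * k) * y0 (n + k)) with herr
  obtain ⟨C2, hC2⟩ : ∃ C2 : ℚ, ∀ n ≥ N, Vge (err n) (n - C2) := by
    obtain ⟨D, hD⟩ : ∃ D : ℚ, D = |C1| + |C| + |G1| + |w| * e := ⟨_, rfl⟩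
    refine ⟨D, fun n hn => Vge.sub ?_ (Vge.sum fun k hk => ?_)⟩
    · refine ((tp_exact (-(w * n))).vge.mul (hG1 n)).mono ?_
      push_cast
      have : 0 ≤ |(w : ℚ)| * e := by positivity
      have := abs_nonneg C1
      have := abs_nonneg C
      have := le_abs_self G1
      rw [hD]; push_cast
      linarith
    · have hk' : k ≤ e := by have := Finset.mem_range.1 hk; omega
      refine ((hC1 k hk' n).mul ((tp_exact (w * k)).vge.mul (hy0v (n + k) (by omega)))).mono ?_
      have h1 : - (|(w : ℚ)| * e) ≤ w * k := by
        have h2 : (k : ℚ) ≤ e := by exact_mod_cast hk'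
        have h3 : |(w : ℚ)| * k ≤ |(w : ℚ)| * e := by gcongr
        have h4 : -(|(w : ℚ)| * k) ≤ w * k := by
          have := neg_abs_le (w : ℚ)
          have h0 : (0 : ℚ) ≤ k := by positivity
          nlinarith
        linarith
      have := le_abs_self C1
      have := le_abs_self C
      have := abs_nonneg G1
      rw [hD]; push_cast
      linarith
  have heq : ∀ n ≥ N, ∑ k ∈ Finset.range (e + 1), c0 k * tp (w * k) * y0 (n + k) = γ n + err n := by
    intro n hn
    have h1 := hrec n hn
    rw [hgs n] at h1
    have h2 : ∑ k ∈ Finset.range (e + 1), b k n * h (n + k) =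
        tp (w * n) * (∑ k ∈ Finset.range (e + 1), c0 k * tp (w * k) * y0 (n + k) +
          ∑ k ∈ Finset.range (e + 1), r k n * (tp (w * k) * y0 (n + k))) := by
      rw [← Finset.sum_add_distrib, Finset.mul_sum]
      refine Finset.sum_congr rfl fun k _ => ?_
      rw [hhy (n + k), htk, hr]; ring
    rw [h2] at h1
    have h3 := congrArg (fun x => tp (-(w * n)) * x) h1
    simp only [mul_add, ← mul_assoc, htt, one_mul] at h3
    rw [herr]; simp only
    rw [← add_sub_assoc, ← h3]
    simp only [mul_assoc, add_sub_cancel_right]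
  obtain ⟨y, hy, hye, C3, hC3⟩ := Step1 O.hP O.hc O.hχ w y0 γ err C C2 N hγ hy0v hC2 heq
  set y1 : ℕ → KL := fun n => tp (w * n) * y n with hy1
  have hy1G : y1 ∈ GG (YS P) w := GG_gen le_rfl hy
  set g' : ℕ → KL := g1 - ∑ k ∈ Finset.range (e + 1), (fun n => r k n * y1 (n + k)) with hg'
  have hg'G : g' ∈ GG (YS P) (w + 1) := by
    refine AddSubgroup.sub_mem _ hg1 (AddSubgroup.sum_mem _ fun k hk => ?_)
    rw [add_comm w 1]
    exact GG_mul (O.hb k (by have := Finset.mem_range.1 hk; omega)) hy1G k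
  have hrec' : ∀ n ≥ N, ∑ k ∈ Finset.range (e + 1), b k n * (h (n + k) - y1 (n + k)) = g' n := by
    intro n hn
    simp only [mul_sub, Finset.sum_sub_distrib]
    rw [hrec n hn, hgs n, ← hye n, hg']
    simp only [Pi.sub_apply, Finset.sum_apply]
    have : ∑ k ∈ Finset.range (e + 1), b k n * y1 (n + k) =
        tp (w * n) * ∑ k ∈ Finset.range (e + 1), c0 k * tp (w * k) * y (n + k) +
        ∑ k ∈ Finset.range (e + 1), r k n * y1 (n + k) := by
      rw [Finset.mul_sum, ← Finset.sum_add_distrib]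
      refine Finset.sum_congr rfl fun k _ => ?_
      rw [hr, hy1]; simp only [htk]; ring
    rw [this]; ring
  obtain ⟨C4, hC4⟩ := GG_bound YS_bound hg'G
  set I : Finset ℕ := (Finset.range (e + 1)).filter (fun k => c0 k ≠ 0) with hI
  have hImem : ∀ k, k ∈ I ↔ k ≤ e ∧ c0 k ≠ 0 := fun k => by
    rw [hI, Finset.mem_filter, Finset.mem_range, Nat.lt_succ_iff]
  have hIne : I.Nonempty := by
    obtain ⟨k, hk, h⟩ := O.hc
    exact ⟨k, (hImem k).2 ⟨hk, h⟩⟩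
  obtain ⟨ks, hksI, hks⟩ := comb I hIne (fun k => (c0 k).order) (fun k hk k' hk' =>
    O.hdiv k ((hImem k).1 hk).1 k' ((hImem k').1 hk').1 ((hImem k).1 hk).2 ((hImem k').1 hk').2) w
  have hkse := ((hImem ks).1 hksI).1
  set θ : ℚ := 1 / (e + 2 : ℚ) with hθ
  have hθ0 : 0 < θ := by rw [hθ]; positivity
  have hθ1 : θ ≤ 1 / 2 := by
    rw [hθ]
    exact one_div_le_one_div_of_le (by norm_num) (by have : (0 : ℚ) ≤ e := by positivity
                                                     linarith)
  obtain ⟨N1, hN1⟩ := exists_nat_gt (C1 + ∑ k ∈ Finset.range (e + 1), |((c0 k).order : ℚ)| + (|(w : ℚ)| + 1) * e + 1)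
  have hord : ∀ k ≤ e, |((c0 k).order : ℚ)| ≤ ∑ k ∈ Finset.range (e + 1), |((c0 k).order : ℚ)| := fun k hk =>
    Finset.single_le_sum (f := fun k => |((c0 k).order : ℚ)|) (fun i _ => abs_nonneg _) (Finset.mem_range.2 (Nat.lt_succ_of_le hk))
  set N' := N + N1 with hN'
  have hwe : 0 ≤ (|(w : ℚ)| + 1) * e := by positivity
  have hbig : ∀ k ≤ e, ∀ n ≥ N', ((c0 k).order : ℚ) < n - C1 := by
    intro k hk n hn
    have h1 := hord k hk
    have h2 := le_abs_self ((c0 k).order : ℚ)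
    have h3 : (N1 : ℚ) ≤ n := by exact_mod_cast (by omega : N1 ≤ n)
    linarith
  obtain ⟨C', hC'⟩ : ∃ C' : ℚ, C' = |C4| + |((c0 ks).order : ℚ)| + |(w + 1 : ℚ)| * ks + |C3| + N' + ks := ⟨_, rfl⟩
  have ha1 := le_abs_self C4
  have ha2 := le_abs_self ((c0 ks).order : ℚ)
  have ha3 : (w + 1 : ℚ) * ks ≤ |(w + 1 : ℚ)| * ks := by gcongr; exact le_abs_self _
  have ha4 := le_abs_self C3
  have hp1 := abs_nonneg C4
  have hp2 := abs_nonneg ((c0 ks).order : ℚ)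
  have hp3 : 0 ≤ |(w + 1 : ℚ)| * ks := by positivity
  have hp4 := abs_nonneg C3
  have hphi : ∀ n ≥ N', Vge (h n - y1 n) ((w + θ) * n - C3) := by
    intro n hn
    have h1 := hC3 n (by omega)
    have h2 := (tp_exact (w * n)).vge.mul h1
    rw [mul_sub, ← hhy] at h2
    exact h2.mono (by push_cast; linarith)
  refine ⟨y, hy, g', hg'G, C', N', fun n hn => ⟨?_, hrec' n (by omega)⟩⟩
  refine Up e b (fun n => h n - y1 n) g' N' ks hkse (fun _ => (c0 ks).order) (fun n => (w + θ) * n - C3)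
    (fun n => (w + 1) * n - C') θ hθ0 (fun n hn => hrec' n (by omega)) ?_ ?_ ?_ hphi ?_ n hn
  · intro n hn
    have h1 : Exact' (c0 ks) (c0 ks).order := (Exact'_iff _ _).2 ⟨((hImem ks).1 hksI).2, rfl⟩
    have h2 := h1.add_small (hC1 ks hkse n) (hbig ks hkse n hn)
    rwa [hr, add_sub_cancel] at h2
  · intro n hn k hk hne
    right
    by_cases h0 : c0 k = 0
    · refine ⟨n - C1, ?_, ?_⟩
      · have : Vge (b k n - c0 k) _ := hC1 k hk n
        rwa [h0, sub_zero] at this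
      · have h1 := hord ks hkse
        have h3 : (N1 : ℚ) ≤ n := by exact_mod_cast (by omega : N1 ≤ n)
        have h4 : ∀ x : ℚ, 0 ≤ x → x ≤ 1 → (w + x) * ((ks : ℚ) - k) ≤ (|(w : ℚ)| + 1) * e := by
          intro x hx0 hx1
          have h5 : |(w : ℚ) + x| ≤ |(w : ℚ)| + 1 := (abs_add_le _ _).trans (by rw [abs_of_nonneg hx0]; linarith)
          have h6 : |(ks : ℚ) - k| ≤ e := by
            rw [abs_le]
            have : (ks : ℚ) ≤ e := by exact_mod_cast hkse
            have : (k : ℚ) ≤ e := by exact_mod_cast hk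
            have : (0 : ℚ) ≤ k := by positivity
            have : (0 : ℚ) ≤ ks := by positivity
            constructor <;> linarith
          calc _ ≤ |(w + x) * ((ks : ℚ) - k)| := le_abs_self _
            _ = |(w : ℚ) + x| * |(ks : ℚ) - k| := abs_mul _ _
            _ ≤ _ := by gcongr
        have h5 := h4 θ hθ0.le (by linarith)
        have h6 := h4 1 (by norm_num) le_rfl
        push_cast
        constructor <;> nlinarith
    · have hkI : k ∈ I := (hImem k).2 ⟨hk, h0⟩
      refine ⟨(c0 k).order, ?_, ?_⟩
      · have h1 : Vge (c0 k) (c0 k).order := (Vge_iff _ _).2 (Or.inr le_rfl)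
        have h2 := h1.add ((hC1 k hk n).mono (hbig k hk n hn).le)
        rwa [hr, add_sub_cancel] at h2
      · have h1 := hks k hkI
        have h2 := comb_strict _ _ w k ks hne θ hθ0 hθ1 h1
        have h3 : ((c0 ks).order : ℚ) + (w + 1) * ks ≤ (c0 k).order + (w + 1) * k := by exact_mod_cast h1.2
        push_cast
        constructor <;> nlinarith
  · intro n hn
    refine (hC4 n).mono ?_
    push_cast
    have : (0 : ℚ) ≤ N' := by positivity
    have : (0 : ℚ) ≤ ks := by positivity
    nlinarith
  · intro n hn hn2
    refine (hphi n hn).mono ?_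
    have h1 : (n : ℚ) ≤ N' + ks := by exact_mod_cast hn2.le
    have : (0 : ℚ) ≤ θ * n := by positivity
    nlinarith

lemma Expand {P : ℚ[X]} {e : ℕ} {b : ℕ → ℕ → KL} {c0 : ℕ → KL} {m : ℕ} (O : Oper P e b c0 m)
    (M : ℕ) (hM : 0 < M)
    (hS : ∀ (N : ℕ) (u : ℕ → ℚ), aeval (Sh ℚ) (P ^ N) u = 0 → ∀ r,
      (∀ n, u (M * n + r) = 0) ∨ ∃ n0, ∀ n ≥ n0, u (M * n + r) ≠ 0) (r : ℕ) (t : ℕ) :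
    ∀ (h g : ℕ → KL) (w : ℤ) (C : ℚ) (N : ℕ), g ∈ GG (YS P) w →
      (∀ n ≥ N, Vge (h n) (w * n - C)) →
      (∀ n ≥ N, ∑ k ∈ Finset.range (e + 1), b k n * h (n + k) = g n) →
      (∃ j i : ℤ, ∃ n0, ∀ n ≥ n0, Exact' (h (M * n + r)) (j * (M * n + r : ℕ) + i)) ∨
      (∃ (C : ℚ) (n0 : ℕ), ∀ n ≥ n0, Vge (h (M * n + r)) ((w + t) * (M * n + r : ℕ) - C)) := by
  induction t with
  | zero =>
    intro h g w C N hg hv hrec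
    right
    refine ⟨C, N, fun n hn => ?_⟩
    have := hv (M * n + r) (by nlinarith)
    simpa using this
  | succ t ih =>
    intro h g w C N hg hv hrec
    obtain ⟨y, hy, g', hg', C', N', h'⟩ := Step O h g w C N hg hv hrec
    by_cases hz : ∀ n, y (M * n + r) = 0
    · rcases ih (fun n => h n - tp (w * n) * y n) g' (w + 1) C' N' hg' (fun n hn => by
          have := (h' n hn).1; push_cast; exact this) (fun n hn => (h' n hn).2) with ⟨j, i, n0, h1⟩ | ⟨C1, n0, h1⟩
      · left
        refine ⟨j, i, n0, fun n hn => ?_⟩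
        have := h1 n hn
        rwa [hz, mul_zero, sub_zero] at this
      · right
        refine ⟨C1, n0, fun n hn => ?_⟩
        have := h1 n hn
        rw [hz, mul_zero, sub_zero] at this
        convert this using 2
        push_cast; ring
    · left
      push Not at hz
      obtain ⟨⟨D, hD⟩, hU⟩ := hy
      have hex : ∃ s : ℕ, ∃ n, (y (M * n + r)).coeff (D + s) ≠ 0 := by
        obtain ⟨n, hn⟩ := hz
        by_contra hc
        push Not at hc
        apply hn
        ext i
        rcases lt_or_ge i D with h1 | h1
        · exact hD _ i h1
        · obtain ⟨s, rfl⟩ : ∃ s : ℕ, i = D + s := ⟨(i - D).toNat, by omega⟩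
          exact hc s n
      classical
      set s := Nat.find hex with hs
      have hlow : ∀ n, ∀ i < D + s, (y (M * n + r)).coeff i = 0 := by
        intro n i hi
        rcases lt_or_ge i D with h1 | h1
        · exact hD _ i h1
        · obtain ⟨s', rfl⟩ : ∃ s' : ℕ, i = D + s' := ⟨(i - D).toNat, by omega⟩
          have := Nat.find_min hex (m := s') (by omega)
          push Not at this
          exact this n
      obtain ⟨n1, hn1⟩ := Nat.find_spec hex
      obtain ⟨NN, hNN⟩ := hU (D + s)
      rcases hS NN _ hNN r with h1 | ⟨n0, h1⟩
      · exact absurd (h1 n1) hn1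
      · obtain ⟨n2, hn2⟩ := exists_nat_gt (C' + (D + s))
        refine ⟨w, D + s, n0 + n2 + N', fun n hn => ?_⟩
        have hge : n ≤ M * n + r := by nlinarith
        have h3 : Exact' (y (M * n + r)) (D + s) := ⟨h1 n (by omega), hlow n⟩
        have h4 := Exact'_tp (m := w * (M * n + r : ℕ)) h3
        have h5 := h4.add_small (h' (M * n + r) (by omega)).1 (by
          have : (n2 : ℚ) ≤ (M * n + r : ℕ) := by exact_mod_cast (by omega : n2 ≤ M * n + r)
          push_cast at this ⊢
          linarith)
        rwa [add_sub_cancel] at h5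


lemma GG_mono {Y : AddSubgroup (ℕ → KL)} {w w' : ℤ} (h : w ≤ w') : GG Y w' ≤ GG Y w := by
  refine AddSubgroup.closure_mono ?_
  rintro _ ⟨j, hj, y, hy, rfl⟩
  exact ⟨j, le_trans h hj, y, hy, rfl⟩

lemma GG_tp {i : ℤ} {g : ℕ → KL} (hg : g ∈ GG CS i) (a : ℤ) (c : KL) :
    (fun n : ℕ => tp (a * n) * (c * g n)) ∈ GG CS (a + i) := by
  unfold GG at hg
  induction hg using AddSubgroup.closure_induction with
  | mem x hx =>
    obtain ⟨i', hi', _, ⟨c', rfl⟩, rfl⟩ := hx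
    have := GG_gen (Y := CS) (show a + i ≤ a + i' by omega) (y := fun _ => c * c') ⟨_, rfl⟩
    convert this using 1
    funext n
    have e2 : tp ((a + i') * n) = tp (a * n) * tp (i' * n) := by
      rw [tp_mul]; congr 1; ring
    beta_reduce
    rw [e2]; ring
  | zero =>
    convert (GG CS (a + i)).zero_mem using 1
    funext n; simp
  | add x y _ _ ha hb =>
    convert AddSubgroup.add_mem _ ha hb using 1
    funext n; simp [mul_add]
  | neg x _ ha =>
    convert AddSubgroup.neg_mem _ ha using 1
    funext n; simp

/-- evaluation of a polynomial at `t ^ (-R n)` -/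
noncomputable def ev (R : ℤ) (p : KL[X]) (n : ℕ) : KL := p.eval (tp (-R * n))

lemma ev_sub_mem (R : ℤ) (hR : 0 < R) (p : KL[X]) :
    (fun n : ℕ => ev R p n - tp ((-R * p.natDegree) * n) * p.leadingCoeff) ∈ GG CS (-R * p.natDegree + 1) := by
  have h1 : (fun n : ℕ => ev R p n - tp ((-R * p.natDegree) * n) * p.leadingCoeff) =
      ∑ i ∈ Finset.range p.natDegree, (fun n : ℕ => tp ((-R * i) * n) * p.coeff i) := by
    funext n
    rw [ev, eval_eq_sum_range, Finset.sum_range_succ, Finset.sum_apply]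
    have : ∀ i : ℕ, tp (-R * n) ^ i = tp ((-R * i) * n) := fun i => by
      rw [tp_pow]; congr 1; ring
    simp only [this, coeff_natDegree]
    rw [mul_comm p.leadingCoeff, add_sub_cancel_right]
    exact Finset.sum_congr rfl fun i _ => mul_comm _ _
  rw [h1]
  refine AddSubgroup.sum_mem _ fun i hi => ?_
  have hi := Finset.mem_range.1 hi
  refine GG_gen (Y := CS) ?_ (y := fun _ => p.coeff i) ⟨_, rfl⟩
  have : (i : ℤ) + 1 ≤ p.natDegree := by exact_mod_cast hi
  nlinarith

lemma ev_exact (R : ℤ) (hR : 0 < R) (p : KL[X]) (hp : p ≠ 0) :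
    ∃ n0 : ℕ, ∀ n ≥ n0, Exact' (ev R p n) ((-R * p.natDegree) * n + p.leadingCoeff.order) := by
  obtain ⟨C, hC⟩ := GG_bound CS_bound (ev_sub_mem R hR p)
  obtain ⟨n0, hn0⟩ := exists_nat_gt (C + p.leadingCoeff.order)
  refine ⟨n0, fun n hn => ?_⟩
  have h1 : Exact' p.leadingCoeff p.leadingCoeff.order := (Exact'_iff _ _).2 ⟨leadingCoeff_ne_zero.2 hp, rfl⟩
  have h2 := Exact'_tp (m := (-R * p.natDegree) * n) h1
  have h3 := h2.add_small (hC n) (by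
    have : (n0 : ℚ) ≤ n := by exact_mod_cast hn
    push_cast; linarith)
  rwa [add_sub_cancel] at h3

lemma ev_vge (R : ℤ) (hR : 0 < R) (p : KL[X]) : ∃ D : ℚ, 0 ≤ D ∧ ∀ n : ℕ, Vge (ev R p n) (-D * n - D) := by
  obtain ⟨C, hC⟩ := GG_bound CS_bound (ev_sub_mem R hR p)
  have hR' : (0 : ℚ) < R := by exact_mod_cast hR
  obtain ⟨D, hD⟩ : ∃ D : ℚ, D = R * p.natDegree + |C| + |(p.leadingCoeff.order : ℚ)| := ⟨_, rfl⟩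
  have hp1 : 0 ≤ (R : ℚ) * p.natDegree := by positivity
  have hp2 := abs_nonneg C
  have hp3 := abs_nonneg (p.leadingCoeff.order : ℚ)
  refine ⟨D, by rw [hD]; positivity, fun n => ?_⟩
  have hn : (0 : ℚ) ≤ n := by positivity
  have h1 : Vge p.leadingCoeff p.leadingCoeff.order := (Vge_iff _ _).2 (Or.inr le_rfl)
  have h2 := (tp_exact ((-R * p.natDegree) * n)).vge.mul h1
  have h3 : (R : ℚ) * p.natDegree * n ≤ D * n := by gcongr; rw [hD]; linarith
  have h4 := (hC n).mono (d := -D * n - D) (by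
    have := le_abs_self C
    push_cast; nlinarith)
  have h5 := h2.mono (d := -D * n - D) (by
    have := neg_abs_le (p.leadingCoeff.order : ℚ)
    push_cast; nlinarith)
  have := h5.add h4
  rwa [add_sub_cancel] at this

lemma ev_vge_fin (R : ℤ) (hR : 0 < R) (p : ℕ → KL[X]) (e : ℕ) :
    ∃ D : ℚ, 0 ≤ D ∧ ∀ k < e, ∀ n : ℕ, Vge (ev R (p k) n) (-D * n - D) := by
  choose D hD0 hD using fun k => ev_vge R hR (p k)
  refine ⟨∑ k ∈ Finset.range e, D k, Finset.sum_nonneg fun k _ => hD0 k, fun k hk n => (hD k n).mono ?_⟩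
  have h1 := Finset.single_le_sum (f := D) (fun i _ => hD0 i) (Finset.mem_range.2 hk)
  have : D k * n ≤ (∑ k ∈ Finset.range e, D k) * n := by gcongr
  nlinarith

lemma fin_Vge (F : ℕ → KL) (φ : ℕ → ℚ) (N : ℕ) : ∃ C : ℚ, ∀ n < N, Vge (F n) (φ n - C) := by
  choose c hc using fun n => exists_Vge (F n)
  refine ⟨∑ n ∈ Finset.range N, |φ n - c n|, fun n hn => (hc n).mono ?_⟩
  have h1 := Finset.single_le_sum (f := fun n => |φ n - c n|) (fun i _ => abs_nonneg _) (Finset.mem_range.2 hn)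
  have := le_abs_self (φ n - c n)
  linarith

/-- quadratic lower bound -/
def Vm (F : ℕ → KL) (s : ℤ) : Prop := ∃ (w C : ℚ) (N : ℕ), ∀ n ≥ N, Vge (F n) (s * n ^ 2 - w * n - C)

lemma Vm_exists (R : ℤ) (hR : 0 < R) (e : ℕ) (p : ℕ → KL[X]) (hpe : p e ≠ 0) (F : ℕ → KL)
    (hrec : ∀ n, ∑ k ∈ Finset.range (e + 1), ev R (p k) n * F (n + k) = 0) : ∃ s, Vm F s := by
  obtain ⟨D, hD0, hD⟩ := ev_vge_fin R hR p e
  obtain ⟨n0, hn0⟩ := ev_exact R hR (p e) hpe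
  set β := (p e).leadingCoeff.order with hβ
  obtain ⟨S, hS⟩ := exists_nat_ge (D + |(β : ℚ)|)
  obtain ⟨C, hC⟩ := fin_Vge F (fun n => (-S : ℚ) * n ^ 2) (n0 + e)
  refine ⟨-S, 0, C, 0, fun n _ => ?_⟩
  induction n using Nat.strong_induction_on with
  | _ n ih =>
    rcases lt_or_ge n (n0 + e) with h | h
    · refine (hC n h).mono ?_
      push_cast; linarith
    obtain ⟨m, rfl⟩ : ∃ m, n = m + e := ⟨n - e, by omega⟩
    have h1 := hrec m
    rw [Finset.sum_range_succ] at h1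
    refine (hn0 m (by omega)).div ?_
    rw [eq_neg_of_add_eq_zero_right h1]
    refine Vge.neg (Vge.sum fun k hk => ?_)
    have hk := Finset.mem_range.1 hk
    refine ((hD k hk m).mul (ih (m + k) (by omega) (by omega))).mono ?_
    have hb := le_abs_self (β : ℚ)
    have hR' : (0 : ℚ) ≤ R * (p e).natDegree * m := by
      have : (0 : ℚ) < R := by exact_mod_cast hR
      positivity
    obtain ⟨j, rfl⟩ : ∃ j, e = k + 1 + j := ⟨e - k - 1, by omega⟩
    have hm : (0 : ℚ) ≤ m := by positivity
    have hkk : (0 : ℚ) ≤ k := by positivity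
    have hj : (0 : ℚ) ≤ j := by positivity
    have hS0 : (0 : ℚ) ≤ S := by positivity
    have key : D * m + D + β ≤ S * ((1 + j) * (2 * m + 2 * k + 1 + j)) := by
      have h5 : D * m + D + β ≤ S * (m + 1) := by
        have := abs_nonneg (β : ℚ)
        nlinarith
      refine h5.trans ?_
      gcongr
      nlinarith
    push_cast
    nlinarith

lemma Vm_bdd (R : ℤ) (hR : 0 < R) (e : ℕ) (p : ℕ → KL[X]) (hp0 : p 0 ≠ 0) (F : ℕ → KL) (hF : ∀ n, F n ≠ 0)
    (hrec : ∀ n, ∑ k ∈ Finset.range (e + 1), ev R (p k) n * F (n + k) = 0) : ∃ s1 : ℤ, ∀ s, Vm F s → s ≤ s1 := by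
  obtain ⟨D, hD0, hD⟩ := ev_vge_fin R hR p (e + 1)
  obtain ⟨n0, hn0⟩ := ev_exact R hR (p 0) hp0
  set β := (p 0).leadingCoeff.order with hβ
  obtain ⟨S, hS⟩ := exists_nat_ge D
  refine ⟨S, fun s ⟨w, C, N, hV⟩ => ?_⟩
  by_contra hs
  push Not at hs
  obtain ⟨n1, hn1⟩ := exists_nat_ge (|w| * e + D + |(β : ℚ)| + 1)
  set N' := N + n0 + n1 with hN'
  apply hF N'
  apply Vge_zero_of_all
  intro c
  have hall : ∀ T : ℚ, ∀ n ≥ N', Vge (F n) (s * n ^ 2 - w * n - C + T) := by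
    intro T
    have hs' : (S : ℚ) + 1 ≤ s := by exact_mod_cast hs
    have hR0 : (0 : ℚ) < R := by exact_mod_cast hR
    have key : ∀ n ≥ N', ∀ k ≤ e, k ≠ 0 → (((-R * (p 0).natDegree) * n + β : ℤ) : ℚ) + (s * n ^ 2 - w * n) + 1 ≤
        (-D * n - D) + (s * (n + k : ℕ) ^ 2 - w * (n + k : ℕ)) := by
      intro n hn k hk hk0
      have h1 : (0 : ℚ) ≤ R * (p 0).natDegree * n := by positivity
      have h2 : (1 : ℚ) ≤ k := by exact_mod_cast Nat.pos_of_ne_zero hk0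
      have h3 : (k : ℚ) ≤ e := by exact_mod_cast hk
      have h4 : w * k ≤ |w| * e := (mul_le_mul_of_nonneg_right (le_abs_self w) (by linarith)).trans
        (mul_le_mul_of_nonneg_left h3 (abs_nonneg w))
      have h5 := le_abs_self (β : ℚ)
      have h6 : (n1 : ℚ) ≤ n := by exact_mod_cast (by omega : n1 ≤ n)
      have h7 : (0 : ℚ) ≤ n := by positivity
      have h8 : (D + 1) * n ≤ s * (2 * n * k) := by
        have : (D + 1) * n ≤ s * n := by gcongr; linarith
        have : s * n * 1 ≤ (s : ℚ) * n * (2 * k) := by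
          have : (0 : ℚ) ≤ s * n := by
            have : (0 : ℚ) ≤ s := by linarith
            positivity
          gcongr; linarith
        linarith
      have h9 : (0 : ℚ) ≤ s * k ^ 2 := by
        have : (0 : ℚ) ≤ s := by linarith
        positivity
      push_cast
      nlinarith
    refine Up e (fun k n => ev R (p k) n) F (fun _ => 0) N' 0 (by omega)
      (fun n => (-R * (p 0).natDegree) * n + β) (fun n => s * n ^ 2 - w * n - C)
      (fun n => s * n ^ 2 - w * n - C + T) 1 one_pos (fun n _ => hrec n) (fun n hn => hn0 n (by omega)) ?_
      (fun n _ => Vge_zero _) (fun n hn => hV n (by omega)) (fun n hn hn2 => by omega)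
    intro n hn k hk hk0
    right
    refine ⟨-D * n - D, hD k (by omega) n, ?_, ?_⟩
    · have := key n hn k hk hk0
      rw [add_zero]; linarith
    · have := key n hn k hk hk0
      rw [add_zero]; linarith
  exact (hall (c - (s * N' ^ 2 - w * N' - C)) N' le_rfl).mono (by linarith)


lemma ar1 (a κ : ℤ) (e : ℕ) (h0 : 0 ≤ a) (h1 : 0 ≤ a + κ) (hκ : κ ≠ 0) (hκe : -(e : ℤ) ≤ κ) (n T x : ℚ)
    (hT : 0 ≤ T) (hx : -(2 * T) ≤ x) (hn : (2 * T + 1) * (e + 1) ≤ n) :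
    1 ≤ 2 * a * n + x + (2 * T + 1) * κ := by
  have he : -(e : ℚ) ≤ κ := by exact_mod_cast hκe
  rcases h0.eq_or_lt with h | h
  · have : (1 : ℚ) ≤ κ := by exact_mod_cast (by omega : 1 ≤ κ)
    rw [← h]
    push_cast
    nlinarith
  · have : (1 : ℚ) ≤ a := by exact_mod_cast h
    have h2 : (2 * T + 1) * (-(e : ℚ)) ≤ (2 * T + 1) * κ := by gcongr
    have h3 : (0 : ℚ) ≤ (2 * T + 1) * (e + 1) := by positivity
    have h4 : n ≤ a * n := by nlinarith
    nlinarith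

lemma dvd_R (R' : ℤ) (e : ℕ) (hd : ∀ k ≤ e, ∀ k' ≤ e, k ≠ k' → ((k : ℤ) - k') ∣ R') (x : ℕ → ℤ)
    (k k' : ℕ) (hk : k ≤ e) (hk' : k' ≤ e) : ((k : ℤ) - k') ∣ R' * x k - R' * x k' := by
  by_cases h : k = k'
  · subst h; simp
  · rw [← mul_sub]; exact Dvd.dvd.mul_right (hd k hk k' hk' h) _

lemma Upgrade (R R' : ℤ) (hR : 0 < R) (hRR : R = 2 * R') (e : ℕ)
    (hd : ∀ k ≤ e, ∀ k' ≤ e, k ≠ k' → ((k : ℤ) - k') ∣ R')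
    (p : ℕ → KL[X]) (hp0 : p 0 ≠ 0) (F : ℕ → KL)
    (hrec : ∀ n, ∑ k ∈ Finset.range (e + 1), ev R (p k) n * F (n + k) = 0) (s : ℤ) (hs : ¬ Vm F (s + 1)) :
    ∃ W1 : ℚ, 0 ≤ W1 ∧ ∀ (C : ℚ) (N : ℕ), ¬ (∀ n ≥ N, Vge (F n) (s * n ^ 2 + W1 * n - C)) := by
  classical
  set β : ℕ → ℤ := fun k => (p k).leadingCoeff.order with hβ
  set A : ℕ → ℤ := fun k => R' * (-(p k).natDegree : ℤ) with hA
  set I := (Finset.range (e + 1)).filter (fun k => p k ≠ 0) with hI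
  have hIne : I.Nonempty := ⟨0, by simp [hI, hp0]⟩
  have hIk : ∀ k ∈ I, k ≤ e ∧ p k ≠ 0 := by
    intro k hk; rw [hI, Finset.mem_filter, Finset.mem_range] at hk; exact ⟨by omega, hk.2⟩
  obtain ⟨ks, hks, hcomb⟩ := comb I hIne A
    (fun k hk k' hk' => dvd_R R' e hd (fun k => (-(p k).natDegree : ℤ)) k k' (hIk k hk).1 (hIk k' hk').1) s
  obtain ⟨T, hT⟩ : ∃ T : ℚ, T = ∑ k ∈ Finset.range (e + 1),
    (|((β k + s * k ^ 2 : ℤ) : ℚ)| + |((β k + (s + 1) * k ^ 2 : ℤ) : ℚ)|) := ⟨_, rfl⟩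
  have hT0 : 0 ≤ T := by rw [hT]; positivity
  have hTk : ∀ k ≤ e, |((β k + s * k ^ 2 : ℤ) : ℚ)| ≤ T ∧ |((β k + (s + 1) * k ^ 2 : ℤ) : ℚ)| ≤ T := by
    intro k hk
    have := Finset.single_le_sum (f := fun k : ℕ => (|((β k + s * k ^ 2 : ℤ) : ℚ)| + |((β k + (s + 1) * k ^ 2 : ℤ) : ℚ)|))
      (fun i _ => by positivity) (Finset.mem_range.2 (Nat.lt_succ_of_le hk))
    rw [← hT] at this
    have h1 := abs_nonneg ((β k + s * k ^ 2 : ℤ) : ℚ)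
    have h2 := abs_nonneg ((β k + (s + 1) * k ^ 2 : ℤ) : ℚ)
    constructor <;> linarith
  have hex : ∀ k, ∃ n0 : ℕ, p k ≠ 0 → ∀ n ≥ n0, Exact' (ev R (p k) n) ((-R * (p k).natDegree) * n + β k) := by
    intro k
    by_cases h : p k = 0
    · exact ⟨0, fun h' => absurd h h'⟩
    · obtain ⟨n0, hn0⟩ := ev_exact R hR (p k) h
      exact ⟨n0, fun _ => hn0⟩
  choose n0 hn0 using hex
  obtain ⟨n1, hn1⟩ := exists_nat_ge ((2 * T + 1) * (e + 1 : ℚ))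
  refine ⟨2 * T + 1, by linarith, fun C N hV => hs ?_⟩
  set N' := N + n1 + ∑ k ∈ Finset.range (e + 1), n0 k with hN'
  have hn0N : ∀ k ≤ e, n0 k ≤ N' := fun k hk => by
    have := Finset.single_le_sum (f := n0) (fun i _ => Nat.zero_le _) (Finset.mem_range.2 (show k < e + 1 by omega))
    omega
  refine ⟨2 * T + 1, C + (N' + e) ^ 2, N', ?_⟩
  obtain ⟨hks1, hks2⟩ := hIk ks hks
  refine Up e (fun k n => ev R (p k) n) F (fun _ => 0) N' ks hks1
      (fun n => (-R * (p ks).natDegree) * n + β ks) (fun n => s * n ^ 2 + (2 * T + 1) * n - C)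
      (fun n => ((s + 1 : ℤ) : ℚ) * n ^ 2 - (2 * T + 1) * n - (C + (N' + e) ^ 2)) 1 one_pos (fun n _ => hrec n)
      (fun n hn => hn0 ks hks2 n (le_trans (hn0N ks hks1) hn)) ?_
      (fun n _ => Vge_zero _) (fun n hn => hV n (by omega)) ?_
  · intro n hn k hk hkne
    by_cases hpk : p k = 0
    · left; simp [ev, hpk]
    right
    refine ⟨_, (hn0 k hpk n (le_trans (hn0N k hk) hn)).vge, ?_, ?_⟩
    · obtain ⟨c1, c2⟩ := hcomb k (by rw [hI, Finset.mem_filter, Finset.mem_range]; exact ⟨by omega, hpk⟩)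
      have hb := hTk k hk
      have hb' := hTk ks hks1
      have h1 := neg_le_of_abs_le hb.1
      have h2 := le_of_abs_le hb'.1
      have hnn : (2 * T + 1) * (e + 1) ≤ (n : ℚ) := hn1.trans (by exact_mod_cast (by omega : n1 ≤ n))
      have := ar1 (A k + s * k - (A ks + s * ks)) (k - ks) e (by linarith) (by linarith) (by omega) (by omega) n T
        (((β k + s * k ^ 2 : ℤ) : ℚ) - ((β ks + s * ks ^ 2 : ℤ) : ℚ)) hT0 (by linarith) hnn
      rw [hRR]
      simp only [hA] at this
      push_cast at this ⊢
      linarith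
    · obtain ⟨c1, c2⟩ := hcomb k (by rw [hI, Finset.mem_filter, Finset.mem_range]; exact ⟨by omega, hpk⟩)
      have hb := hTk k hk
      have hb' := hTk ks hks1
      have h1 := neg_le_of_abs_le hb.2
      have h2 := le_of_abs_le hb'.2
      have hnn : (2 * T + 1) * (e + 1) ≤ (n : ℚ) := hn1.trans (by exact_mod_cast (by omega : n1 ≤ n))
      have := ar1 (A k + (s + 1) * k - (A ks + (s + 1) * ks)) (ks - k) e (by linarith) (by linarith) (by omega) (by omega) n T
        (((β k + (s + 1) * k ^ 2 : ℤ) : ℚ) - ((β ks + (s + 1) * ks ^ 2 : ℤ) : ℚ)) hT0 (by linarith) hnn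
      rw [hRR]
      simp only [hA] at this
      push_cast at this ⊢
      linarith
  · intro n hn hn2
    refine (hV n (by omega)).mono ?_
    have h1 : (n : ℚ) ≤ N' + e := by exact_mod_cast (by omega : n ≤ N' + e)
    have h2 : (0 : ℚ) ≤ n := by positivity
    push_cast
    nlinarith


lemma ar2 (s n i j K D W E M : ℚ) (hn : 0 ≤ n) (hi0 : 0 ≤ i) (hj0 : 0 ≤ j) (hi : i ≤ E * M) (hj : j ≤ M) (hW : 0 ≤ W)
    (hK0 : 0 ≤ K) (hK : W + D + 2 * |s| * (E * M) + 2 * |s| * M ≤ K) :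
    s * (n + j) ^ 2 + W * (n + j) - (|s| * M ^ 2 + W * M + |s| * (E * M) ^ 2 + D)  ≤
      -D * n - D + (s * (n + i) ^ 2 + K * (n + i)) := by
  have a1 := le_abs_self s
  have a2 := neg_abs_le s
  have a3 := abs_nonneg s
  have h1 : s * (2 * n * j + j ^ 2) ≤ |s| * (2 * n * M + M ^ 2) :=
    mul_le_mul a1 (by gcongr) (by positivity) a3
  have h2 : (-s) * (2 * n * i + i ^ 2) ≤ |s| * (2 * n * (E * M) + (E * M) ^ 2) :=
    mul_le_mul (by linarith) (by gcongr) (by positivity) a3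
  have h3 : W * j ≤ W * M := by gcongr
  have h4 : (W + D + 2 * |s| * (E * M) + 2 * |s| * M) * n ≤ K * n := by gcongr
  have h5 : 0 ≤ K * i := by positivity
  nlinarith

lemma Spread1 (R : ℤ) (hR : 0 < R) (M E : ℕ) (F : ℕ → KL) (j : ℕ) (hj : j < M)
    (hrel : ∃ Q : KL[X], Q ≠ 0 ∧ ∃ S : ℕ → KL[X], ∀ n, ev R Q n * F (n + j) =
      ∑ i ∈ Finset.range E, ev R (S i) n * F (n + i * M)) (s : ℤ) (r : ℕ) (W1 : ℚ) (hW : 0 ≤ W1) :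
    ∃ K0 : ℚ, ∀ K ≥ K0, ∀ (C : ℚ) (n0 : ℕ),
      (∀ n ≥ n0, Vge (F (M * n + r)) (s * (M * n + r : ℕ) ^ 2 + K * (M * n + r : ℕ) - C)) →
      ∃ (C' : ℚ) (N : ℕ), ∀ n ≥ N, Vge (F (M * n + r + j))
        (s * (M * n + r + j : ℕ) ^ 2 + W1 * (M * n + r + j : ℕ) - C') := by
  obtain ⟨Q, hQ, S, hS⟩ := hrel
  obtain ⟨D, hD0, hD⟩ := ev_vge_fin R hR S E
  obtain ⟨n1, hn1⟩ := ev_exact R hR Q hQ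
  set β := Q.leadingCoeff.order
  set c : ℚ := |(s : ℚ)|
  have hc : 0 ≤ c := abs_nonneg _
  refine ⟨W1 + D + 2 * c * (E * M) + 2 * c * M, fun K hK C n0 hF => ?_⟩
  have hK0 : 0 ≤ K := le_trans (by positivity) hK
  refine ⟨c * M ^ 2 + W1 * M + c * (E * M) ^ 2 + D + C + β, n0 + n1, fun n hn => ?_⟩
  have hMn : n ≤ M * n := Nat.le_mul_of_pos_left _ (by omega)
  refine (hn1 (M * n + r) (by omega)).div ?_
  rw [hS]
  refine Vge.sum fun i hi => ?_
  have hi := Finset.mem_range.1 hi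
  have h1 := hF (n + i) (by omega)
  have e1 : M * (n + i) + r = M * n + r + i * M := by ring
  rw [e1] at h1
  refine ((hD i hi (M * n + r)).mul h1).mono ?_
  have h2 := ar2 s (M * n + r : ℕ) (i * M : ℕ) j K D W1 E M (by positivity) (by positivity) (by positivity)
    (by push_cast; gcongr) (by exact_mod_cast hj.le) hW hK0 hK
  have h3 : (0 : ℚ) ≤ R * Q.natDegree * (M * n + r : ℕ) := by
    have : (0 : ℚ) < R := by exact_mod_cast hR
    positivity
  have e2 : ((M * n + r + j : ℕ) : ℚ) = (M * n + r : ℕ) + j := by push_cast; ring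
  have e3 : ((M * n + r + i * M : ℕ) : ℚ) = (M * n + r : ℕ) + (i * M : ℕ) := by push_cast; ring
  have e4 : (((-R * Q.natDegree) * (M * n + r : ℕ) + β : ℤ) : ℚ) = - (R * Q.natDegree * (M * n + r : ℕ)) + β := by
    push_cast; ring
  rw [e2, e3, e4]
  linarith

lemma Spread (R : ℤ) (hR : 0 < R) (M E : ℕ) (hM : 0 < M) (F : ℕ → KL)
    (hrel : ∀ j < M, ∃ Q : KL[X], Q ≠ 0 ∧ ∃ S : ℕ → KL[X], ∀ n, ev R Q n * F (n + j) =
      ∑ i ∈ Finset.range E, ev R (S i) n * F (n + i * M)) (s : ℤ) (r : ℕ) (W1 : ℚ) (hW : 0 ≤ W1) :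
    ∃ K0 : ℚ, ∀ K ≥ K0, ∀ (C : ℚ) (n0 : ℕ),
      (∀ n ≥ n0, Vge (F (M * n + r)) (s * (M * n + r : ℕ) ^ 2 + K * (M * n + r : ℕ) - C)) →
      ∃ (C' : ℚ) (N : ℕ), ∀ n ≥ N, Vge (F n) (s * (n : ℚ) ^ 2 + W1 * n - C') := by
  have h1 : ∀ j : Fin M, _ := fun j => Spread1 R hR M E F j.1 j.2 (hrel j.1 j.2) s r W1 hW
  choose K0 hK0 using h1
  refine ⟨∑ j, |K0 j|, fun K hK C n0 hF => ?_⟩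
  have h2 : ∀ j : Fin M, _ := fun j => hK0 j K (le_trans (le_trans (le_abs_self _)
    (Finset.single_le_sum (f := fun j => |K0 j|) (fun i _ => abs_nonneg _) (Finset.mem_univ j))) hK) C n0 hF
  choose C' N h3 using h2
  refine ⟨∑ j, |C' j|, r + M * (∑ j, N j), fun n hn => ?_⟩
  have hj : (n - r) % M < M := Nat.mod_lt _ hM
  have e1 : M * ((n - r) / M) + r + (n - r) % M = n := by
    have := Nat.div_add_mod (n - r) M
    have : r ≤ n := by omega
    omega
  have h4 := h3 ⟨(n - r) % M, hj⟩ ((n - r) / M) (by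
    rw [ge_iff_le, Nat.le_div_iff_mul_le hM]
    have := Finset.single_le_sum (f := N) (fun i _ => Nat.zero_le _) (Finset.mem_univ ⟨(n - r) % M, hj⟩)
    have := Nat.mul_le_mul_left M this
    rw [mul_comm]
    omega)
  simp only [e1] at h4
  refine h4.mono ?_
  have := Finset.single_le_sum (f := fun j => |C' j|) (fun i _ => abs_nonneg _) (Finset.mem_univ ⟨(n - r) % M, hj⟩)
  have := le_abs_self (C' ⟨(n - r) % M, hj⟩)
  linarith

lemma order_tp_mul (a : ℤ) (x : KL) (hx : x ≠ 0) : (tp a * x).order = a + x.order :=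
  ((Exact'_iff _ _).1 (Exact'_tp (m := a) ((Exact'_iff _ _).2 ⟨hx, rfl⟩))).2

/-- characteristic polynomial attached to a set of indices -/
noncomputable def chiS (p : ℕ → KL[X]) (S : Finset ℕ) : ℚ[X] :=
  ∑ k ∈ S, C ((p k).leadingCoeff.coeff (p k).leadingCoeff.order) * X ^ k

lemma chiS_ne (p : ℕ → KL[X]) (S : Finset ℕ) (hS : S.Nonempty) (hp : ∀ k ∈ S, p k ≠ 0) : chiS p S ≠ 0 := by
  obtain ⟨k, hk⟩ := hS
  intro h
  have h1 : (chiS p S).coeff k = 0 := by rw [h]; simp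
  rw [chiS, finsetSum_coeff] at h1
  simp only [coeff_C_mul, coeff_X_pow, mul_ite, mul_one, mul_zero] at h1
  rw [Finset.sum_ite_eq S k, if_pos hk] at h1
  exact HahnSeries.coeff_order_eq_zero.not.2 (leadingCoeff_ne_zero.2 (hp k hk)) h1

lemma exists_Pi (p : ℕ → KL[X]) (e : ℕ) : ∃ (m : ℕ) (P : ℚ[X]), P.coeff 0 ≠ 0 ∧
    ∀ S : Finset ℕ, S.Nonempty → (∀ k ∈ S, k ≤ e ∧ p k ≠ 0) → chiS p S ∣ X ^ m * P := by
  classical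
  set Z := (Finset.range (e + 1)).powerset.filter (fun S => S.Nonempty ∧ ∀ k ∈ S, p k ≠ 0) with hZ
  have hT : ∏ S ∈ Z, chiS p S ≠ 0 := by
    refine Finset.prod_ne_zero_iff.2 fun S hS => ?_
    rw [hZ, Finset.mem_filter] at hS
    exact chiS_ne p S hS.2.1 hS.2.2
  obtain ⟨P, hP, hnd⟩ := exists_eq_pow_rootMultiplicity_mul_and_not_dvd _ hT 0
  rw [C_0, sub_zero] at hP hnd
  refine ⟨rootMultiplicity 0 (∏ S ∈ Z, chiS p S), P, fun h => hnd (X_dvd_iff.2 h), fun S hS hSk => ?_⟩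
  rw [← hP]
  refine Finset.dvd_prod_of_mem _ ?_
  rw [hZ, Finset.mem_filter, Finset.mem_powerset]
  exact ⟨fun k hk => Finset.mem_range.2 (Nat.lt_succ_of_le (hSk k hk).1), hS, fun k hk => (hSk k hk).2⟩


lemma Oper_mk (R R' : ℤ) (hR : 0 < R) (hRR : R = 2 * R') (e : ℕ)
    (hd : ∀ k ≤ e, ∀ k' ≤ e, k ≠ k' → ((k : ℤ) - k') ∣ R')
    (p : ℕ → KL[X]) (hp0 : p 0 ≠ 0) (hord : ∀ k, R ∣ (p k).leadingCoeff.order)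
    (m : ℕ) (P : ℚ[X]) (hP0 : P.coeff 0 ≠ 0)
    (hχ : ∀ S : Finset ℕ, S.Nonempty → (∀ k ∈ S, k ≤ e ∧ p k ≠ 0) → chiS p S ∣ X ^ m * P) (s : ℤ) :
    ∃ (m' : ℤ) (c0 : ℕ → KL), Oper P e
      (fun k n => tp ((2 * s * k - m') * n) * (tp (s * k ^ 2) * ev R (p k) n)) c0 m := by
  classical
  set I := (Finset.range (e + 1)).filter (fun k => p k ≠ 0) with hI
  have hIne : I.Nonempty := ⟨0, by simp [hI, hp0]⟩
  have hIk : ∀ k ∈ I, k ≤ e ∧ p k ≠ 0 := by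
    intro k hk; rw [hI, Finset.mem_filter, Finset.mem_range] at hk; exact ⟨by omega, hk.2⟩
  obtain ⟨k0, hk0, hmin⟩ := I.exists_min_image (fun k => -R * (p k).natDegree + 2 * s * k) hIne
  obtain ⟨m', hm'⟩ : ∃ m', m' = -R * (p k0).natDegree + 2 * s * k0 := ⟨_, rfl⟩
  rw [← hm'] at hmin
  set c0 : ℕ → KL := fun k => if p k ≠ 0 ∧ -R * (p k).natDegree + 2 * s * k = m' then
    tp (s * k ^ 2) * (p k).leadingCoeff else 0 with hc0
  have hc0ne : ∀ k, c0 k ≠ 0 → p k ≠ 0 ∧ c0 k = tp (s * k ^ 2) * (p k).leadingCoeff := by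
    intro k hk
    by_cases h : p k ≠ 0 ∧ -R * (p k).natDegree + 2 * s * k = m'
    · exact ⟨h.1, by rw [hc0]; simp only; rw [if_pos h]⟩
    · exfalso; apply hk; rw [hc0]; simp only; rw [if_neg h]
  have hordc : ∀ k, c0 k ≠ 0 → (c0 k).order = s * k ^ 2 + (p k).leadingCoeff.order := by
    intro k hk
    obtain ⟨h1, h2⟩ := hc0ne k hk
    rw [h2, order_tp_mul _ _ (leadingCoeff_ne_zero.2 h1)]
  refine ⟨m', c0, hP0, ?_, ?_, ?_, ?_⟩
  · intro k hk
    by_cases hpk : p k = 0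
    · convert (GG CS 1).zero_mem using 1
      funext n
      simp [hc0, hpk, ev]
    have hmk := hmin k (by rw [hI, Finset.mem_filter, Finset.mem_range]; exact ⟨by omega, hpk⟩)
    have h1 := GG_tp (ev_sub_mem R hR (p k)) (2 * s * k - m') (tp (s * k ^ 2))
    have h1' := GG_mono (show (1 : ℤ) ≤ 2 * s * k - m' + (-R * (p k).natDegree + 1) by linarith) h1
    have h2 : (fun n : ℕ => tp ((2 * s * k - m' + -R * (p k).natDegree) * n) * (tp (s * k ^ 2) * (p k).leadingCoeff)
        - c0 k) ∈ GG CS 1 := by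
      by_cases h : -R * (p k).natDegree + 2 * s * k = m'
      · convert (GG CS 1).zero_mem using 1
        funext n
        have h3 : (2 * s * k - m' + -R * (p k).natDegree) = 0 := by linarith
        rw [h3, zero_mul, tp_zero, one_mul, hc0]
        simp only
        rw [if_pos ⟨hpk, h⟩, sub_self]; rfl
      · have h3 : c0 k = 0 := by
          rw [hc0]; simp only; rw [if_neg (fun hh => h hh.2)]
        simp only [h3, sub_zero]
        have h4 : m' < -R * (p k).natDegree + 2 * s * k := lt_of_le_of_ne hmk (Ne.symm h)
        exact GG_gen (Y := CS) (by linarith) (y := fun _ => (tp (s * k ^ 2) * (p k).leadingCoeff)) ⟨_, rfl⟩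
    convert (GG CS 1).add_mem h1' h2 using 1
    funext n
    have e2 : tp ((2 * s * k - m' + -R * (p k).natDegree) * n) =
        tp ((2 * s * k - m') * n) * tp ((-R * (p k).natDegree) * n) := by
      rw [tp_mul]; congr 1; ring
    simp only [Pi.add_apply]
    rw [e2]; ring
  · obtain ⟨h1, h2⟩ := hIk k0 hk0
    refine ⟨k0, h1, ?_⟩
    rw [hc0]; simp only
    rw [if_pos ⟨h2, hm'.symm⟩]
    exact mul_ne_zero (tp_ne _) (leadingCoeff_ne_zero.2 h2)
  · intro k hk k' hk' h h'
    rw [hordc k h, hordc k' h']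
    choose x hx using hord
    have h1 := dvd_R R' e hd (fun k => 2 * x k) k k' hk hk'
    have e1 : s * (k : ℤ) ^ 2 + (p k).leadingCoeff.order - (s * (k' : ℤ) ^ 2 + (p k').leadingCoeff.order)
      = (R' * (2 * x k) - R' * (2 * x k')) + (k - k') * (s * (k + k')) := by
      rw [hx k, hx k', hRR]; ring
    rw [e1]
    exact dvd_add h1 (dvd_mul_right _ _)
  · intro S hS hSk
    have h1 := hχ S hS (fun k hk => ⟨(hSk k hk).1, (hc0ne k (hSk k hk).2).1⟩)
    convert h1 using 1
    unfold chiS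
    refine Finset.sum_congr rfl fun k hk => ?_
    have h2 := (hSk k hk).2
    congr 2
    rw [hordc k h2, (hc0ne k h2).2, coeff_tp_mul, add_sub_cancel_left]

theorem Analytic (R R' : ℤ) (hR : 0 < R) (hRR : R = 2 * R') (e : ℕ)
    (hd : ∀ k ≤ e, ∀ k' ≤ e, k ≠ k' → ((k : ℤ) - k') ∣ R')
    (p : ℕ → KL[X]) (hp0 : p 0 ≠ 0) (hpe : p e ≠ 0) (hord : ∀ k, R ∣ (p k).leadingCoeff.order)
    (F : ℕ → KL) (hF : ∀ n, F n ≠ 0)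
    (hrec : ∀ n, ∑ k ∈ Finset.range (e + 1), ev R (p k) n * F (n + k) = 0) :
    ∃ M : ℕ, 0 < M ∧ ((∀ j < M, ∃ Q : KL[X], Q ≠ 0 ∧ ∃ S : ℕ → KL[X], ∀ n, ev R Q n * F (n + j) =
      ∑ i ∈ Finset.range e, ev R (S i) n * F (n + i * M)) →
      ∀ r : ℕ, ∃ s j i : ℤ, ∃ n0 : ℕ, ∀ n ≥ n0,
        Exact' (F (M * n + r)) (s * (M * n + r : ℕ) ^ 2 + j * (M * n + r : ℕ) + i)) := by
  obtain ⟨m, P, hP0, hχ⟩ := exists_Pi p e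
  obtain ⟨M, hM, hS⟩ := sml P hP0
  refine ⟨M, hM, fun hrel r => ?_⟩
  obtain ⟨s1, hs1⟩ := Vm_bdd R hR e p hp0 F hF hrec
  obtain ⟨s, hs, hmax⟩ := Int.exists_greatest_of_bdd (P := Vm F) ⟨s1, hs1⟩ (Vm_exists R hR e p hpe F hrec)
  have hns : ¬ Vm F (s + 1) := fun h => by have := hmax _ h; omega
  obtain ⟨W1, hW1, hup⟩ := Upgrade R R' hR hRR e hd p hp0 F hrec s hns
  obtain ⟨K0, hK0⟩ := Spread R hR M e hM F hrel s r W1 hW1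
  obtain ⟨m', c0, O⟩ := Oper_mk R R' hR hRR e hd p hp0 hord m P hP0 hχ s
  obtain ⟨w, C, N, hV⟩ := hs
  set w0 : ℤ := -⌈w⌉ with hw0
  obtain ⟨t, ht⟩ := exists_nat_ge (K0 - w0)
  have hFh : ∀ n : ℕ, F n = tp (s * n ^ 2) * (tp (-(s * n ^ 2)) * F n) := by
    intro n; rw [← mul_assoc, tp_mul, add_neg_cancel, tp_zero, one_mul]
  have hE := Expand O M hM hS r t (fun n => tp (-(s * n ^ 2)) * F n) 0 w0 C N (AddSubgroup.zero_mem _) ?_ ?_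
  · rcases hE with ⟨j, i, n0, h⟩ | ⟨C', n0, h⟩
    · refine ⟨s, j, i, n0, fun n hn => ?_⟩
      rw [hFh, add_assoc]
      exact Exact'_tp (h n hn)
    · exfalso
      obtain ⟨C2, N2, h2⟩ := hK0 (w0 + t) (by linarith) C' n0 (fun n hn => by
        have h3 := Vge_tp (m := s * (M * n + r : ℕ) ^ 2).2 (h n hn)
        rw [← hFh] at h3
        refine h3.mono (le_of_eq ?_)
        push_cast; ring)
      exact hup C2 N2 h2
  · intro n hn
    refine (Vge_tp.2 (hV n hn) : Vge (tp (-(s * n ^ 2)) * F n) _).mono ?_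
    have h1 := Int.le_ceil w
    have h2 : (0 : ℚ) ≤ n := by positivity
    have h3 : w * n ≤ ⌈w⌉ * n := by gcongr
    rw [hw0]; push_cast; linarith
  · intro n _
    have h1 : ∀ k : ℕ, tp ((2 * s * k - m') * n) * (tp (s * k ^ 2) * ev R (p k) n) * (tp (-(s * (n + k : ℕ) ^ 2)) * F (n + k))
      = tp (-(m' * n) - s * n ^ 2) * (ev R (p k) n * F (n + k)) := by
      intro k
      have : tp (-(m' * n) - s * n ^ 2) = tp ((2 * s * k - m') * n) * tp (s * k ^ 2) * tp (-(s * (n + k : ℕ) ^ 2)) := by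
        rw [tp_mul, tp_mul]; congr 1; push_cast; ring
      rw [this]; ring
    simp only [h1]
    rw [← Finset.mul_sum, hrec, mul_zero]; rfl


section alg
variable {K : Type*} [Field K] (q : K)

lemma comp_ne (hq : q ≠ 0) (D : K[X]) (hD : D ≠ 0) (r M : ℕ) (hM : 0 < M) :
    D.comp (C (q ^ r) * X ^ M) ≠ 0 := by
  intro h
  rw [comp_eq_zero_iff] at h
  rcases h with h | ⟨_, h⟩
  · exact hD h
  · have h1 := congrArg natDegree h
    rw [natDegree_C, natDegree_C_mul_X_pow _ _ (pow_ne_zero _ hq)] at h1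
    omega

lemma qRel (hq : q ≠ 0) (f : ℕ → K) (e : ℕ) (P : ℕ → K[X]) (hP : P (e + 1) ≠ 0)
    (hrec : ∀ n : ℕ, ∑ k ∈ Finset.range (e + 2), (P k).eval (q ^ n) * f (n + k) = 0) (i : ℕ) :
    ∃ D : K[X], D ≠ 0 ∧ ∃ r : ℕ → K[X], ∀ n : ℕ,
      D.eval (q ^ n) * f (n + i) = ∑ j ∈ Finset.range (e + 1), (r j).eval (q ^ n) * f (n + j) := by
  induction i with
  | zero =>
    refine ⟨1, one_ne_zero, fun j => if j = 0 then 1 else 0, fun n => ?_⟩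
    rw [Finset.sum_range_succ', Finset.sum_eq_zero]
    · simp
    · intro x _; simp
  | succ i ih =>
    obtain ⟨D, hD, r, h⟩ := ih
    set r' : ℕ → K[X] := fun j => (r j).comp (C (q ^ 1) * X ^ 1) with hr'
    have hev : ∀ (D : K[X]) (n : ℕ), (D.comp (C (q ^ 1) * X ^ 1)).eval (q ^ n) = D.eval (q ^ (n + 1)) := by
      intro D n
      rw [eval_comp]; congr 1; rw [pow_one, pow_one, eval_mul, eval_C, eval_X, pow_succ, mul_comm]
    refine ⟨P (e + 1) * D.comp (C (q ^ 1) * X ^ 1), mul_ne_zero hP (comp_ne q hq D hD 1 1 one_pos),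
      fun j => (if j = 0 then 0 else r' (j - 1) * P (e + 1)) - r' e * P j, fun n => ?_⟩
    have h1 := h (n + 1)
    have h2 := hrec n
    rw [Finset.sum_range_succ] at h2
    have h3 : f (n + (i + 1)) = f (n + 1 + i) := by congr 1; ring
    rw [eval_mul, hev, h3, mul_assoc, h1, Finset.sum_range_succ]
    have h4 : f (n + 1 + e) = f (n + (e + 1)) := by congr 1; ring
    rw [h4]
    have h5 : ∑ j ∈ Finset.range (e + 1), ((if j = 0 then 0 else r' (j - 1) * P (e + 1)) - r' e * P j).eval (q ^ n) * f (n + j)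
      = (P (e + 1)).eval (q ^ n) * (∑ j ∈ Finset.range e, (r j).eval (q ^ (n + 1)) * f (n + 1 + j))
        - (r e).eval (q ^ (n + 1)) * ∑ j ∈ Finset.range (e + 1), (P j).eval (q ^ n) * f (n + j) := by
      simp only [eval_sub, sub_mul, Finset.sum_sub_distrib]
      congr 1
      · rw [Finset.sum_range_succ']
        simp only [Finset.mul_sum]
        simp only [if_pos, eval_zero, zero_mul, add_zero]
        refine Finset.sum_congr rfl fun j _ => ?_
        have h6 : f (n + (j + 1)) = f (n + 1 + j) := by congr 1; ring
        rw [if_neg (by omega), eval_mul, Nat.add_sub_cancel, hr', hev, h6]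
        ring
      · rw [Finset.mul_sum]
        refine Finset.sum_congr rfl fun j _ => ?_
        rw [eval_mul, hr', hev]; ring
    rw [h5, eq_neg_of_add_eq_zero_left h2]
    ring

lemma Dich (hq : q ≠ 0) (f : ℕ → K) (e : ℕ) (P : ℕ → K[X]) (hP : P (e + 1) ≠ 0)
    (hrec : ∀ n : ℕ, ∑ k ∈ Finset.range (e + 2), (P k).eval (q ^ n) * f (n + k) = 0) (M : ℕ) :
    (∃ b : ℕ → K[X], (∃ k ≤ e, b k ≠ 0) ∧ ∀ n : ℕ, ∑ k ∈ Finset.range (e + 1), (b k).eval (q ^ n) * f (n + k * M) = 0) ∨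
    (∀ j, ∃ Q : K[X], Q ≠ 0 ∧ ∃ S : ℕ → K[X], ∀ n : ℕ, Q.eval (q ^ n) * f (n + j) =
      ∑ i ∈ Finset.range (e + 1), (S i).eval (q ^ n) * f (n + i * M)) := by
  choose D hD r hr using qRel q hq f e P hP hrec
  set A : Matrix (Fin (e + 1)) (Fin (e + 1)) K[X] := Matrix.of fun i j => r (i * M) j with hA
  have hrA : ∀ (i : Fin (e + 1)) (n : ℕ), (D (i * M)).eval (q ^ n) * f (n + i * M) =
      ∑ j : Fin (e + 1), (A i j).eval (q ^ n) * f (n + j) := by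
    intro i n
    rw [hr, Finset.sum_range]; rfl
  by_cases hdet : A.det = 0
  · left
    obtain ⟨v, hv, hvA⟩ := Matrix.exists_vecMul_eq_zero_iff.2 hdet
    obtain ⟨k0, hk0⟩ := Function.ne_iff.1 hv
    refine ⟨fun k => if h : k < e + 1 then v ⟨k, h⟩ * D (k * M) else 0, ⟨k0, by omega, ?_⟩, fun n => ?_⟩
    · simp only [Fin.is_lt, dif_pos]
      exact mul_ne_zero hk0 (hD _)
    · rw [Finset.sum_range]
      simp only [Fin.is_lt, dif_pos, Fin.eta, eval_mul, mul_assoc, hrA]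
      simp only [Finset.mul_sum]
      rw [Finset.sum_comm]
      refine Finset.sum_eq_zero fun j _ => ?_
      have h1 := congrArg (fun p => eval (q ^ n) p * f (n + j)) (congrFun hvA j)
      simp only [Matrix.vecMul, dotProduct, eval_finsetSum, Pi.zero_apply, eval_zero, zero_mul, eval_mul, Finset.sum_mul, mul_assoc] at h1
      exact h1
  · right
    intro j
    refine ⟨A.det * D j, mul_ne_zero hdet (hD j),
      fun i => if h : i < e + 1 then ∑ l : Fin (e + 1), r j l * A.adjugate l ⟨i, h⟩ * D (i * M) else 0, fun n => ?_⟩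
    have h1 : ∀ l : Fin (e + 1), A.det.eval (q ^ n) * f (n + l) =
        ∑ i : Fin (e + 1), (A.adjugate l i).eval (q ^ n) * ((D (i * M)).eval (q ^ n) * f (n + i * M)) := by
      intro l
      simp only [hrA, Finset.mul_sum]
      rw [Finset.sum_comm]
      have h2 : ∀ m, ∑ i, (A.adjugate l i).eval (q ^ n) * ((A i m).eval (q ^ n) * f (n + m)) =
          ((A.adjugate * A) l m).eval (q ^ n) * f (n + m) := by
        intro m
        rw [Matrix.mul_apply, eval_finsetSum, Finset.sum_mul]
        exact Finset.sum_congr rfl fun i _ => by rw [eval_mul, mul_assoc]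
      simp only [h2, Matrix.adjugate_mul, Matrix.smul_apply, Matrix.one_apply, smul_eq_mul]
      rw [Finset.sum_eq_single l]
      · simp
      · intro b _ hb
        rw [if_neg (Ne.symm hb)]; simp
      · simp
    rw [eval_mul, mul_assoc, hr, Finset.sum_range, Finset.sum_range, Finset.mul_sum]
    have h3 : ∀ l : Fin (e + 1), A.det.eval (q ^ n) * ((r j l).eval (q ^ n) * f (n + l)) =
      ∑ i : Fin (e + 1), (r j l).eval (q ^ n) * ((A.adjugate l i).eval (q ^ n) * ((D (i * M)).eval (q ^ n) * f (n + i * M))) := by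
      intro l
      rw [mul_left_comm, h1, Finset.mul_sum]
    simp only [h3]
    rw [Finset.sum_comm]
    refine Finset.sum_congr rfl fun i _ => ?_
    simp only [Fin.is_lt, dif_pos, Fin.eta, eval_finsetSum, eval_mul, Finset.sum_mul, mul_assoc]

end alg

/-- quadratic quasi-polynomial, class by class -/
def QQ (d : ℕ → ℤ) : Prop := ∃ M : ℕ, 0 < M ∧ ∀ r : ℕ, ∃ a b c : ℚ, ∃ n0 : ℕ, ∀ n ≥ n0,
  (d (M * n + r) : ℚ) = a * (M * n + r : ℕ) ^ 2 + b * (M * n + r : ℕ) + c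

lemma QQ_shift (d : ℕ → ℤ) (h : QQ (fun n => d (n + 1))) : QQ d := by
  obtain ⟨M, hM, h⟩ := h
  refine ⟨M, hM, fun r => ?_⟩
  obtain ⟨a, b, c, n0, h⟩ := h (r + M - 1)
  refine ⟨a, b - 2 * a, c - b + a, n0 + 1, fun n hn => ?_⟩
  obtain ⟨m, rfl⟩ : ∃ m, n = m + 1 := ⟨n - 1, by omega⟩
  have e1 : M * (m + 1) + r = (M * m + (r + M - 1)) + 1 := by
    rw [mul_add]; omega
  rw [e1, h m (by omega)]
  push_cast; ring

lemma QQ_classes (d : ℕ → ℤ) (M : ℕ) (hM : 0 < M) (h : ∀ r, QQ (fun n => d (M * n + r))) : QQ d := by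
  choose Mr hMr h using h
  refine ⟨M * ∏ v ∈ Finset.range M, Mr v, Nat.mul_pos hM (Finset.prod_pos fun i _ => hMr i), fun r => ?_⟩
  obtain ⟨x, hx⟩ : Mr (r % M) ∣ ∏ v ∈ Finset.range M, Mr v :=
    Finset.dvd_prod_of_mem _ (Finset.mem_range.2 (Nat.mod_lt _ hM))
  have hx0 : 0 < x := by
    have : 0 < ∏ v ∈ Finset.range M, Mr v := Finset.prod_pos fun i _ => hMr i
    rw [hx] at this
    exact Nat.pos_of_mul_pos_left this
  obtain ⟨a, b, c, n0, h⟩ := h (r % M) (r / M)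
  set v := r % M with hv
  refine ⟨a / M ^ 2, b / M - 2 * a * v / M ^ 2, c - b * v / M + a * v ^ 2 / M ^ 2, n0, fun n hn => ?_⟩
  have h1 := h (x * n) (le_trans hn (Nat.le_mul_of_pos_left _ hx0))
  have e1 : M * (∏ v ∈ Finset.range M, Mr v) * n + r = M * (Mr v * (x * n) + r / M) + v := by
    have := Nat.div_add_mod r M
    rw [hx]
    calc M * (Mr v * x) * n + r = M * (Mr v * x) * n + (M * (r / M) + r % M) := by rw [this]
      _ = _ := by rw [← hv]; ring
  rw [e1, h1]
  have hM' : (M : ℚ) ≠ 0 := by exact_mod_cast hM.ne'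
  generalize Mr v * (x * n) + r / M = y
  push_cast
  field_simp
  ring

lemma QQ_final (d : ℕ → ℤ) (h : QQ d) : ∃ (N : ℕ) (π : ℕ), 0 < π ∧
      ∃ c₂ c₁ c₀ : ℕ → ℚ,
        (∀ n, c₂ (n + π) = c₂ n) ∧ (∀ n, c₁ (n + π) = c₁ n) ∧ (∀ n, c₀ (n + π) = c₀ n) ∧
        ∀ n, N ≤ n → (d n : ℚ) = c₂ n * (n : ℚ) ^ 2 + c₁ n * (n : ℚ) + c₀ n := by
  obtain ⟨M, hM, h⟩ := h
  choose a b c n0 h using h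
  refine ⟨M * ∑ r ∈ Finset.range M, n0 r, M, hM, fun n => a (n % M), fun n => b (n % M), fun n => c (n % M),
    fun n => by simp, fun n => by simp, fun n => by simp, fun n hn => ?_⟩
  have h1 := h (n % M) (n / M) (by
    rw [ge_iff_le, Nat.le_div_iff_mul_le hM]
    have := Finset.single_le_sum (f := n0) (fun i _ => Nat.zero_le _) (Finset.mem_range.2 (Nat.mod_lt n hM))
    have := Nat.mul_le_mul_left M this
    rw [mul_comm]
    omega)
  rw [Nat.div_add_mod] at h1
  exact h1


/-- substitution `q = t ^ (-R)` -/
noncomputable def gR (R : ℤ) : ℚ[X] →+* KL := eval₂RingHom HahnSeries.C (tp (-R))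

lemma aeval_exact (R : ℤ) (hR : 0 < R) (p : ℚ[X]) (hp : p ≠ 0) :
    Exact' (gR R p) (-R * p.natDegree) := by
  rw [gR, coe_eval₂RingHom, eval₂_eq_sum_range]
  have hlt : ∀ i < p.natDegree, -R * p.natDegree < i * -R := fun i hi => by
    have : (i : ℤ) < p.natDegree := by exact_mod_cast hi
    nlinarith
  have hc : ∀ j, (∑ i ∈ Finset.range (p.natDegree + 1), HahnSeries.C (p.coeff i) * tp (-R) ^ i).coeff j =
      ∑ i ∈ Finset.range (p.natDegree + 1), p.coeff i * (tp (i * -R)).coeff j := by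
    intro j
    rw [HahnSeries.coeff_sum]
    exact Finset.sum_congr rfl fun i _ => by
      rw [HahnSeries.C_mul_eq_smul, HahnSeries.coeff_smul, tp_pow, smul_eq_mul]
  refine ⟨?_, fun j hj => ?_⟩
  · rw [hc, Finset.sum_range_succ, Finset.sum_eq_zero, zero_add]
    · rw [mul_comm (-R)]
      exact mul_ne_zero (leadingCoeff_ne_zero.2 hp) (tp_exact _).1
    · intro i hi
      rw [(tp_exact (i * -R)).2 _ (hlt i (Finset.mem_range.1 hi)), mul_zero]
  · rw [hc, Finset.sum_eq_zero]
    intro i hi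
    rw [(tp_exact (i * -R)).2, mul_zero]
    have h2 : (i : ℤ) ≤ p.natDegree := by exact_mod_cast (by have := Finset.mem_range.1 hi; omega : i ≤ _)
    nlinarith

lemma exists_iota (R : ℤ) (hR : 0 < R) : ∃ ι : RatFunc ℚ →+* KL, ι RatFunc.X = tp (-R) ∧
    ∀ x, x ≠ 0 → (ι x).order = -R * x.intDegree := by
  have hinj : Function.Injective (gR R) := by
    rw [injective_iff_map_eq_zero]
    intro p hp
    by_contra h
    exact ((Exact'_iff _ _).1 (aeval_exact R hR p h)).1 hp
  have hl : ∀ p : ℚ[X], IsFractionRing.lift (K := RatFunc ℚ) hinj (algebraMap _ _ p) = gR R p := fun p => by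
    rw [IsFractionRing.lift_algebraMap]
  refine ⟨IsFractionRing.lift hinj, ?_, fun x hx => ?_⟩
  · rw [← RatFunc.algebraMap_X, hl, gR, coe_eval₂RingHom, eval₂_X]
  · have h1 : x * algebraMap _ _ x.denom = algebraMap _ _ x.num := by
      have := RatFunc.num_div_denom x
      rw [div_eq_iff (RatFunc.algebraMap_ne_zero x.denom_ne_zero)] at this
      exact this.symm
    have h2 := congrArg (IsFractionRing.lift (K := RatFunc ℚ) hinj) h1
    rw [map_mul, hl, hl] at h2
    have hd := (Exact'_iff _ _).1 (aeval_exact R hR x.denom x.denom_ne_zero)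
    have hn := (Exact'_iff _ _).1 (aeval_exact R hR x.num (RatFunc.num_ne_zero hx))
    have h3 := congrArg HahnSeries.order h2
    rw [HahnSeries.order_mul ((_root_.map_ne_zero _).2 hx) hd.1, hd.2, hn.2] at h3
    rw [RatFunc.intDegree]
    linarith

lemma fac_dvd (e : ℕ) : ∀ k ≤ e, ∀ k' ≤ e, k ≠ k' → ((k : ℤ) - k') ∣ (e.factorial : ℤ) := by
  intro k hk k' hk' hne
  rw [← Int.natAbs_dvd]
  exact Int.natCast_dvd_natCast.2 (Nat.dvd_factorial (by omega) (by omega))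

lemma qX_inj : Function.Injective (fun n : ℕ => (RatFunc.X : RatFunc ℚ) ^ n) := by
  intro a b h
  have h1 := congrArg RatFunc.intDegree h
  simp only at h1
  have h2 : ∀ n : ℕ, ((RatFunc.X : RatFunc ℚ) ^ n).intDegree = n := by
    intro n
    rw [← RatFunc.algebraMap_X, ← map_pow, RatFunc.intDegree_polynomial, natDegree_X_pow]
  rw [h2, h2] at h1
  exact_mod_cast h1

theorem Claim (e : ℕ) : ∀ (f : ℕ → RatFunc ℚ) (P : ℕ → (RatFunc ℚ)[X]), (∀ n, f n ≠ 0) → (∃ k ≤ e, P k ≠ 0) →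
    (∀ n : ℕ, ∑ k ∈ Finset.range (e + 1), (P k).eval (RatFunc.X ^ n) * f (n + k) = 0) →
    QQ (fun n => (f n).intDegree) := by
  induction e with
  | zero =>
    intro f P hf hP hrec
    exfalso
    obtain ⟨k, hk, hPk⟩ := hP
    obtain rfl : k = 0 := by omega
    apply hPk
    refine eq_zero_of_infinite_isRoot _ ((Set.infinite_range_of_injective qX_inj).mono ?_)
    rintro _ ⟨n, rfl⟩
    have := hrec n
    simp only [zero_add, Finset.sum_range_one, add_zero] at this
    exact (mul_eq_zero.1 this).resolve_right (hf n)
  | succ e ih =>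
    intro f P hf hP hrec
    by_cases hPe : P (e + 1) = 0
    · refine ih f P hf ?_ ?_
      · obtain ⟨k, hk, hPk⟩ := hP
        refine ⟨k, ?_, hPk⟩
        have : k ≠ e + 1 := by rintro rfl; exact hPk hPe
        omega
      · intro n
        have := hrec n
        rwa [Finset.sum_range_succ, hPe, eval_zero, zero_mul, add_zero] at this
    by_cases hP0 : P 0 = 0
    · apply QQ_shift
      refine ih (fun n => f (n + 1)) (fun k => P (k + 1)) (fun n => hf _) ⟨e, le_rfl, hPe⟩ fun n => ?_
      have := hrec n
      rwa [Finset.sum_range_succ', hP0, eval_zero, zero_mul, add_zero] at this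
    have hq : (RatFunc.X : RatFunc ℚ) ≠ 0 := RatFunc.X_ne_zero
    set R' : ℤ := ((e + 1).factorial : ℤ) with hR'
    have hR'0 : 0 < R' := by rw [hR']; exact_mod_cast Nat.factorial_pos _
    have hR : 0 < 2 * R' := by linarith
    obtain ⟨ι, hι, hord⟩ := exists_iota (2 * R') hR
    have hev : ∀ (p : (RatFunc ℚ)[X]) (n : ℕ), ev (2 * R') (p.map ι) n = ι (p.eval (RatFunc.X ^ n)) := by
      intro p n
      have : tp (-(2 * R') * n) = ι (RatFunc.X ^ n) := by
        rw [map_pow, hι, tp_pow, mul_comm]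
      rw [ev, this, eval_map, eval₂_at_apply]
    obtain ⟨M, hM, hA⟩ := Analytic (2 * R') R' hR rfl (e + 1) (fac_dvd (e + 1)) (fun k => (P k).map ι)
      (by rwa [Ne, Polynomial.map_eq_zero]) (by rwa [Ne, Polynomial.map_eq_zero])
      (fun k => by
        rw [leadingCoeff_map]
        by_cases h : (P k).leadingCoeff = 0
        · simp [h]
        · rw [hord _ h]; exact Dvd.intro _ (by ring : 2 * R' * (-(P k).leadingCoeff.intDegree) = _))
      (fun n => ι (f n)) (fun n => (_root_.map_ne_zero _).2 (hf n))
      (fun n => by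
        have := congrArg ι (hrec n)
        simpa only [map_sum, map_mul, hev, map_zero] using this)
    rcases Dich RatFunc.X hq f e P hPe hrec M with ⟨b, ⟨k0, hk0, hbk⟩, hb⟩ | hrel
    · refine QQ_classes _ M hM fun r => ?_
      refine ih (fun n => f (M * n + r)) (fun k => (b k).comp (C (RatFunc.X ^ r) * X ^ M)) (fun n => hf _)
        ⟨k0, hk0, comp_ne _ hq _ hbk r M hM⟩ fun n => ?_
      have := hb (M * n + r)
      rw [← this]
      refine Finset.sum_congr rfl fun k _ => ?_
      have e1 : M * (n + k) + r = M * n + r + k * M := by ring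
      rw [e1, eval_comp]
      congr 2
      simp only [eval_mul, eval_C, eval_pow, eval_X]
      rw [← pow_mul, ← pow_add]; congr 1; ring
    · have hA' := hA (fun j _ => by
        obtain ⟨Q, hQ, S, h⟩ := hrel j
        refine ⟨Q.map ι, by rwa [Ne, Polynomial.map_eq_zero], fun i => (S i).map ι, fun n => ?_⟩
        have := congrArg ι (h n)
        simpa only [map_sum, map_mul, hev] using this)
      refine ⟨M, hM, fun r => ?_⟩
      obtain ⟨s, j, i, n0, h⟩ := hA' r
      have hR0 : (R' : ℚ) ≠ 0 := by exact_mod_cast hR'0.ne'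
      refine ⟨-s / (2 * R'), -j / (2 * R'), -i / (2 * R'), n0, fun n hn => ?_⟩
      have h1 := ((Exact'_iff _ _).1 (h n hn)).2
      rw [hord _ (hf _)] at h1
      have h2 : -(2 * (R' : ℚ)) * ((f (M * n + r)).intDegree : ℚ) =
          s * (M * n + r : ℕ) ^ 2 + j * (M * n + r : ℕ) + i := by exact_mod_cast h1
      have h3 : ((f (M * n + r)).intDegree : ℚ) =
        -(s * (M * n + r : ℕ) ^ 2 + j * (M * n + r : ℕ) + i) / (2 * R') := by
        rw [← h2]; field_simp
      rw [h3]; ring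

/-- the polynomial in `(RatFunc ℚ)[X]` attached to a polynomial in two variables -/
noncomputable def toP (a : MvPolynomial (Fin 2) ℚ) : (RatFunc ℚ)[X] :=
  MvPolynomial.aeval ![(X : (RatFunc ℚ)[X]), C RatFunc.X] a

lemma toP_eval (a : MvPolynomial (Fin 2) ℚ) (x : RatFunc ℚ) :
    (toP a).eval x = MvPolynomial.aeval ![x, RatFunc.X] a := by
  have : ((Polynomial.aeval x : (RatFunc ℚ)[X] →ₐ[RatFunc ℚ] RatFunc ℚ).restrictScalars ℚ).comp
    (MvPolynomial.aeval ![(X : (RatFunc ℚ)[X]), C RatFunc.X]) = MvPolynomial.aeval ![x, RatFunc.X] := by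
    apply MvPolynomial.algHom_ext
    intro i
    fin_cases i <;> simp
  rw [← this]
  simp [toP]

lemma toP_inj (a : MvPolynomial (Fin 2) ℚ) (h : toP a = 0) : a = 0 := by
  have hq : AlgebraicIndependent ℚ (fun _ : Fin 1 => (RatFunc.X : RatFunc ℚ)) := by
    rw [algebraicIndependent_unique_type_iff]
    rw [transcendental_iff]
    intro p hp
    rw [← RatFunc.algebraMap_X, aeval_algebraMap_apply, aeval_X_left_apply] at hp
    exact RatFunc.algebraMap_injective _ (by simpa using hp)
  set φ := (MvPolynomial.aeval (fun _ : Fin 1 => (RatFunc.X : RatFunc ℚ)) : MvPolynomial (Fin 1) ℚ →ₐ[ℚ] _) with hφ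
  have h1 : ∀ a, toP a = (MvPolynomial.finSuccEquiv ℚ 1 a).map φ.toRingHom := by
    intro a
    have : (MvPolynomial.aeval ![(X : (RatFunc ℚ)[X]), C RatFunc.X]) =
      (Polynomial.mapAlgHom φ).comp (MvPolynomial.finSuccEquiv ℚ 1).toAlgHom := by
      apply MvPolynomial.algHom_ext
      intro i
      fin_cases i
      · simp [MvPolynomial.finSuccEquiv_X_zero]
      · have : (⟨1, by omega⟩ : Fin 2) = Fin.succ 0 := rfl
        rw [this, AlgHom.comp_apply]
        have h5 : (MvPolynomial.finSuccEquiv ℚ 1).toAlgHom (MvPolynomial.X (Fin.succ 0)) = C (MvPolynomial.X 0) :=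
          MvPolynomial.finSuccEquiv_X_succ
        rw [h5]
        simp [hφ]
    rw [toP, this]; rfl
  rw [h1, Polynomial.map_eq_zero_iff hq] at h
  simpa using h

end Helpers

theorem degree_of_qHolonomic_is_quadratic_quasiPolynomial
    (f : ℕ → RatFunc ℚ) (hf : ∀ n, f n ≠ 0)
    (d : ℕ) (a : Fin (d + 1) → MvPolynomial (Fin 2) ℚ)
    (ha : ∃ k, a k ≠ 0)
    (hrec : ∀ n : ℕ,
      ∑ k : Fin (d + 1),
        (MvPolynomial.aeval ![(RatFunc.X : RatFunc ℚ) ^ n, RatFunc.X]) (a k) * f (n + k) = 0) :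
    ∃ (N : ℕ) (π : ℕ), 0 < π ∧
      ∃ c₂ c₁ c₀ : ℕ → ℚ,
        (∀ n, c₂ (n + π) = c₂ n) ∧ (∀ n, c₁ (n + π) = c₁ n) ∧ (∀ n, c₀ (n + π) = c₀ n) ∧
        ∀ n, N ≤ n →
          ((f n).intDegree : ℚ) = c₂ n * (n : ℚ) ^ 2 + c₁ n * (n : ℚ) + c₀ n := by
  refine QQ_final (fun n => (f n).intDegree) (Claim d f
    (fun k => if h : k < d + 1 then toP (a ⟨k, h⟩) else 0) hf ?_ fun n => ?_)
  · obtain ⟨k, hk⟩ := ha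
    refine ⟨k, by omega, ?_⟩
    simp only [Fin.is_lt, dif_pos, Fin.eta]
    exact fun h => hk (toP_inj _ h)
  · rw [← hrec n, Finset.sum_range]
    refine Finset.sum_congr rfl fun k _ => ?_
    simp only [Fin.is_lt, dif_pos, Fin.eta, toP_eval]
end

section
/- Let a : ℕ → ℤ be an integer-valued quadratic quasi-polynomial: there exist a positive integer π and functions c₂, c₁, c₀ : ℕ → ℚ, each periodic with period π, such that (a(n) : ℚ) = c₂(n)·n² + c₁(n)·n + c₀(n) for all n ∈ ℕ. Then for every slope s of a, i.e. for every value s = 2·c₂(n) with n ∈ ℕ, one has s·π² ∈ ℤ. -/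
/-- If `a : ℕ → ℤ` is an integer-valued quadratic quasi-polynomial with
period `π`, then for every slope `s = 2·c₂(n)` one has `s·π² ∈ ℤ`. -/
theorem slope_mul_period_sq_integral
    (a : ℕ → ℤ) (π : ℕ) (hπ : 0 < π)
    (c₂ c₁ c₀ : ℕ → ℚ)
    (h₂ : ∀ n, c₂ (n + π) = c₂ n) (h₁ : ∀ n, c₁ (n + π) = c₁ n)
    (h₀ : ∀ n, c₀ (n + π) = c₀ n)
    (ha : ∀ n : ℕ, (a n : ℚ) = c₂ n * (n : ℚ) ^ 2 + c₁ n * (n : ℚ) + c₀ n) :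
    ∀ n : ℕ, ∃ k : ℤ, (2 * c₂ n) * (π : ℚ) ^ 2 = (k : ℚ) := by
  intro n
  refine ⟨a (n + π + π) - 2 * a (n + π) + a n, ?_⟩
  push_cast
  rw [ha (n + π + π), ha (n + π), ha n]
  simp only [h₂, h₁, h₀]
  push_cast
  ring
end

section
/- Let m be a positive integer, π a positive integer, and a : ℕ → ℚ a sequence such that, in ℚ[[z]], the product (1 − z^π)^m · ∑_{n≥0} a(n) z^n equals (the power series of) a polynomial P(z) with deg P < π·m. Then a is a quasi-polynomial of degree at most m−1 and period π: there exist functions c₀, …, c_{m−1} : ℕ → ℚ, each periodic with period π, such that a(n) = ∑_{j=0}^{m−1} c_j(n)·n^j for all n ∈ ℕ. -/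
open PowerSeries

lemma qp_coeff (π : ℕ) (F : PowerSeries ℚ) (m n : ℕ) :
    coeff (n + π * m) ((1 - (X : PowerSeries ℚ) ^ π) ^ m * F)
      = (fwdDiff π)^[m] (fun k => coeff k F) n := by
  induction m generalizing n with
  | zero => simp
  | succ m ih =>
    rw [Function.iterate_succ_apply', fwdDiff, ← ih, ← ih, pow_succ', mul_assoc, sub_mul, one_mul,
      map_sub]
    have h1 : n + π * (m + 1) = (n + π * m) + π := by ring
    have h2 : n + π + π * m = (n + π * m) + π := by ring
    rw [h1, h2, coeff_X_pow_mul]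

/-- The interpolating polynomial on a residue class. -/
noncomputable def qpPoly (m π : ℕ) (a : ℕ → ℚ) (r : ℕ) : Polynomial ℚ :=
  ∑ j ∈ Finset.range m, Polynomial.C ((fwdDiff π)^[j] a r / (j.factorial : ℚ)) *
    (descPochhammer ℚ j).comp (Polynomial.C (1 / (π : ℚ)) * (Polynomial.X - Polynomial.C (r : ℚ)))

lemma qpPoly_natDegree (m : ℕ) (hm : 0 < m) (π : ℕ) (a : ℕ → ℚ) (r : ℕ) :
    (qpPoly m π a r).natDegree < m := by
  have : (qpPoly m π a r).natDegree ≤ m - 1 := by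
    apply Polynomial.natDegree_sum_le_of_forall_le
    intro j hj
    refine (Polynomial.natDegree_C_mul_le _ _).trans ?_
    refine Polynomial.natDegree_comp_le.trans ?_
    rw [descPochhammer_natDegree]
    have h : (Polynomial.C (1 / (π : ℚ)) *
        (Polynomial.X - Polynomial.C (r : ℚ))).natDegree ≤ 1 := by
      refine (Polynomial.natDegree_C_mul_le _ _).trans ?_
      rw [Polynomial.natDegree_X_sub_C]
    have := Finset.mem_range.1 hj
    calc _ ≤ j * 1 := Nat.mul_le_mul_left _ h
      _ ≤ m - 1 := by omega
  omega

theorem quasiPolynomial_of_generating_series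
    (m : ℕ) (hm : 0 < m) (π : ℕ) (hπ : 0 < π) (a : ℕ → ℚ)
    (P : Polynomial ℚ) (hdeg : P.degree < (π * m : ℕ))
    (heq : (1 - (PowerSeries.X : PowerSeries ℚ) ^ π) ^ m * PowerSeries.mk a
      = (P : PowerSeries ℚ)) :
    ∃ c : Fin m → ℕ → ℚ,
      (∀ j : Fin m, ∀ n : ℕ, c j (n + π) = c j n) ∧
      ∀ n : ℕ, a n = ∑ j : Fin m, c j n * (n : ℚ) ^ (j : ℕ) := by
  have hD : (fwdDiff π)^[m] a = fun _ => 0 := by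
    funext n
    have h := qp_coeff π (PowerSeries.mk a) m n
    simp only [coeff_mk] at h
    rw [← h, heq, Polynomial.coeff_coe]
    apply Polynomial.coeff_eq_zero_of_degree_lt
    refine hdeg.trans_le ?_
    exact_mod_cast Nat.le_add_left _ _
  have hz : ∀ i, (fwdDiff π)^[m + i] a = fun _ => 0 := by
    intro i
    induction i with
    | zero => exact hD
    | succ i ih =>
      rw [← add_assoc, Function.iterate_succ_apply', ih]
      funext n
      simp [fwdDiff]
  refine ⟨fun j n => (qpPoly m π a (n % π)).coeff j, fun j n => by simp, fun n => ?_⟩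
  rw [Fin.sum_univ_eq_sum_range (fun j => (qpPoly m π a (n % π)).coeff j * (n : ℚ) ^ j) m,
    ← Polynomial.eval_eq_sum_range' (qpPoly_natDegree m hm π a _)]
  have hn : n % π + (n / π) • π = n := by
    rw [smul_eq_mul, mul_comm]; exact Nat.mod_add_div n π
  have hs := shift_eq_sum_fwdDiff_iter π a (n / π) (n % π)
  rw [hn] at hs
  have hq : (1 / (π : ℚ)) * ((n : ℚ) - ((n % π : ℕ) : ℚ)) = ((n / π : ℕ) : ℚ) := by
    have h : ((n % π : ℕ) : ℚ) + ((n / π : ℕ) : ℚ) * π = n := by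
      exact_mod_cast hn
    have : (π : ℚ) ≠ 0 := by positivity
    rw [← h]; field_simp; ring
  rw [qpPoly, Polynomial.eval_finset_sum, hs]
  simp only [Polynomial.eval_mul, Polynomial.eval_C, Polynomial.eval_comp, Polynomial.eval_sub,
    Polynomial.eval_X, hq, descPochhammer_eval_eq_descFactorial, Nat.descFactorial_eq_factorial_mul_choose]
  set k := n / π
  set r := n % π
  have e1 : ∑ j ∈ Finset.range (k + 1), k.choose j • (fwdDiff π)^[j] a r
      = ∑ j ∈ Finset.range (m + (k + 1)), k.choose j • (fwdDiff π)^[j] a r := by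
    apply Finset.sum_subset
    · intro x; simp; omega
    · intro x _ hx
      rw [Nat.choose_eq_zero_of_lt (by simpa using hx), zero_smul]
  rw [e1, Finset.sum_range_add]
  simp only [hz, smul_zero, Finset.sum_const_zero, add_zero]
  refine Finset.sum_congr rfl fun j _ => ?_
  have : (j.factorial : ℚ) ≠ 0 := by positivity
  push_cast
  rw [nsmul_eq_mul]
  field_simp
end
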